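/- Let a > 0 and δ ∈ (0,1/8) be fixed. The series ζ_{E,0}(s) = Σ_{k≥1} E_{0,k}(s) converges absolutely and locally uniformly on the strip {s ∈ ℂ : 1 < Re(s) < 2}, and its sum extends to a meromorphic function on ℂ which is holomorphic at s = 0. Moreover, for fixed δ, the derivative at 0 of this extension satisfies ζ_{E,0}'(0) = ζ(0)·log(a) + O(1/a²) as a → +∞. -/

import Mathlib

open MeasureTheory Filter

/-- The error integral `E_{0,k}(s)` for the model hyperbolic cusp of height `a`:
`E_{0,k}(s) = -(sin(πs)/π) · ∫_{k^{δ-1}}^{∞} (k²u² - 1/4)^{-s} · u/(u² + (2πa)²) du`. -/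
noncomputable def cuspE0 (a δ : ℝ) (k : ℕ) (s : ℂ) : ℂ :=
  -(Complex.sin ((Real.pi : ℂ) * s) / (Real.pi : ℂ)) *
    ∫ u in Set.Ioi ((k : ℝ) ^ (δ - 1)),
      (((k : ℝ) ^ 2 * u ^ 2 - 1 / 4 : ℝ) : ℂ) ^ (-s) *
        ((u / (u ^ 2 + (2 * Real.pi * a) ^ 2) : ℝ) : ℂ)

/-!
Put `B = (2πa)²`, `M = k^{2δ} - 1/4`, `C = B k² + 1/4`, `r = M / C`. The substitution
`t = M / (k² u² - 1/4)` turns `E_{0,k}(s)` into a truncated beta integral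
`-sin(πs)/(2π) · M^{-s} · ∫₀¹ t^{s-1} / (1 + t/r) dt`, and the beta integral over the whole
half-line gives, for `0 < Re s < 1`,
`E_{0,k}(s) = -C^{-s}/2 + sin(πs)/(2π) · r M^{-s} ∫₀¹ t^{-s} / (1 + r t) dt`.

On a bounded set with `Re s` bounded away from `1` from above, expanding `1 / (1 + r t)` and the
powers of `M` and `C` binomially produces finitely many terms `c(s) k^{-(e(s) + γ)}` with `c`
holomorphic, `e` affine and `γ` real, plus a remainder that is summable over `k`. The terms
sum to `c(s) ζ(e(s) + γ)`, and the continuations to larger and larger sets agree by the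
identity theorem.

Near `0` the second series converges as it stands, and the first differs from `B^{-s} ζ(2s)` by the
convergent `B^{-s} ∑ ((k² + 1/(4B))^{-s} - k^{-2s})`. The derivative at `0` is therefore
`-log B / 4 + log(2π) / 2 = ζ(0) log a`, up to two sums which are each `O(1/B)`.
-/

open Asymptotics Set
open scoped Topology

namespace CuspZeta

section TruncatedBeta

theorem image_div_one_sub_Ioo : (fun x : ℝ => x / (1 - x)) '' Ioo 0 1 = Ioi 0 := by
  ext t
  simp only [mem_image, mem_Ioo, mem_Ioi]
  constructor
  · rintro ⟨x, ⟨hx0, hx1⟩, rfl⟩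
    exact div_pos hx0 (by linarith)
  · intro ht
    refine ⟨t / (1 + t), ⟨by positivity, ?_⟩, by field_simp; ring⟩
    rw [div_lt_one (by positivity)]
    linarith

theorem mellin_one_add_inv {w : ℂ} (h0 : 0 < w.re) (h1 : w.re < 1) :
    mellin (fun t : ℝ => ((1 + t : ℝ) : ℂ)⁻¹) w = Real.pi / Complex.sin (Real.pi * w) := by
  have hbeta := Complex.Gamma_mul_Gamma_eq_betaIntegral h0 (t := 1 - w) (by simpa using h1)
  rw [Complex.Gamma_mul_Gamma_one_sub, add_sub_cancel, Complex.Gamma_one, one_mul] at hbeta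
  have hderiv (x : ℝ) (hx : x ∈ Ioo (0 : ℝ) 1) :
      HasDerivWithinAt (fun x : ℝ => x / (1 - x)) (1 / (1 - x) ^ 2) (Ioo 0 1) x := by
    have hx1 : 1 - x ≠ 0 := by linarith [hx.2]
    convert! ((hasDerivAt_id x).div ((hasDerivAt_id x).const_sub 1) hx1).hasDerivWithinAt using 1
    simp
  have hinj : InjOn (fun x : ℝ => x / (1 - x)) (Ioo 0 1) := by
    intro x hx y hy hxy
    have hx1 : 1 - x ≠ 0 := by linarith [hx.2]
    have hy1 : 1 - y ≠ 0 := by linarith [hy.2]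
    simp only [div_eq_div_iff hx1 hy1] at hxy
    linarith
  rw [hbeta, Complex.betaIntegral, intervalIntegral.integral_of_le zero_le_one,
    integral_Ioc_eq_integral_Ioo, mellin, ← image_div_one_sub_Ioo,
    integral_image_eq_integral_abs_deriv_smul measurableSet_Ioo hderiv hinj]
  refine setIntegral_congr_fun measurableSet_Ioo fun x hx => ?_
  have hx1 : 0 < 1 - x := by linarith [hx.2]
  have hne : (1 - x : ℂ) ≠ 0 := by exact_mod_cast hx1.ne'
  have hker : (1 + x / (1 - x))⁻¹ = 1 - x := by field_simp; ring
  have hpow : ((x / (1 - x) : ℝ) : ℂ) ^ (w - 1) = x ^ (w - 1) / (1 - x : ℂ) ^ (w - 1) := by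
    simpa using Complex.div_cpow_ofReal_nonneg hx.1.le hx1.le (w - 1)
  simp only [← Complex.ofReal_inv, hker, hpow, abs_of_pos (one_div_pos.2 (pow_pos hx1 2)),
    show 1 - w - 1 = -(w - 1) - 1 by ring, Complex.cpow_sub _ _ hne, Complex.cpow_neg,
    Complex.cpow_one, Complex.real_smul, smul_eq_mul]
  push_cast
  field_simp

/-- The Cauchy kernel `t ↦ 1 / (1 + r t)` cut off to `(0, 1]`. -/
noncomputable def truncatedKernel (r : ℝ) : ℝ → ℂ :=
  (Ioc 0 1).indicator fun t => ((1 + r * t : ℝ) : ℂ)⁻¹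

/-- The truncated beta integral `∫₀¹ t ^ (w - 1) / (1 + r t) dt`, as a Mellin transform. Over the
whole half-line the integral would be `r ^ (-w) π / sin (π w)`. -/
noncomputable def truncatedBeta (r : ℝ) (w : ℂ) : ℂ :=
  mellin (truncatedKernel r) w

theorem truncatedBeta_eq_setIntegral (r : ℝ) (w : ℂ) :
    truncatedBeta r w = ∫ t in Ioc (0 : ℝ) 1, (t : ℂ) ^ (w - 1) * ((1 + r * t : ℝ) : ℂ)⁻¹ := by
  have hpoint (t : ℝ) : (t : ℂ) ^ (w - 1) • truncatedKernel r t =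
      (Ioc (0 : ℝ) 1).indicator (fun t => (t : ℂ) ^ (w - 1) * ((1 + r * t : ℝ) : ℂ)⁻¹) t := by
    rw [indicator_mul_right, smul_eq_mul, truncatedKernel]
  simp only [truncatedBeta, mellin, hpoint, setIntegral_indicator measurableSet_Ioc,
    inter_eq_right.2 (Ioc_subset_Ioi_self : Ioc (0 : ℝ) 1 ⊆ Ioi 0)]

variable {r : ℝ} {w : ℂ}

theorem one_add_mul_ne_zero {t : ℝ} (hr : 0 < r) (ht : 0 < t) : (1 + r * t : ℂ) ≠ 0 := by
  exact_mod_cast (by positivity : 1 + r * t ≠ 0)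

theorem norm_one_add_mul_inv_le_one {t : ℝ} (hr : 0 < r) (ht : 0 < t) :
    ‖((1 + r * t : ℝ) : ℂ)⁻¹‖ ≤ 1 := by
  have hrt := mul_pos hr ht
  rw [norm_inv, Complex.norm_real, Real.norm_of_nonneg (by linarith)]
  exact inv_le_one_of_one_le₀ (by linarith)

-- `1 + r t ≥ √(r t)`
theorem norm_one_add_mul_inv_le_rpow {t : ℝ} (hr : 0 < r) (ht : 0 < t) :
    ‖((1 + r * t : ℝ) : ℂ)⁻¹‖ ≤ r ^ (-(1 / 2) : ℝ) * t ^ (-(1 / 2) : ℝ) := by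
  have hrt := mul_pos hr ht
  rw [norm_inv, Complex.norm_real, Real.norm_of_nonneg (by linarith),
    ← Real.mul_rpow hr.le ht.le, Real.rpow_neg hrt.le, ← Real.sqrt_eq_rpow]
  refine inv_anti₀ (Real.sqrt_pos.2 hrt) ?_
  nlinarith [Real.sq_sqrt hrt.le, sq_nonneg (Real.sqrt (r * t) - 1)]

theorem locallyIntegrableOn_truncatedKernel (hr : 0 < r) :
    LocallyIntegrableOn (truncatedKernel r) (Ioi 0) := by
  have hcont : ContinuousOn (fun t : ℝ => ((1 + r * t : ℝ) : ℂ)⁻¹) (Ioi 0) :=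
    ContinuousOn.inv₀ (by fun_prop) fun t ht => by
      simpa using one_add_mul_ne_zero hr ht
  intro x hx
  obtain ⟨u, hu, hu_int⟩ := hcont.locallyIntegrableOn (μ := volume) measurableSet_Ioi x hx
  exact ⟨u, hu, hu_int.indicator measurableSet_Ioc⟩

theorem truncatedKernel_isBigO_zero (hr : 0 < r) :
    truncatedKernel r =O[𝓝[>] 0] (· ^ (-0 : ℝ)) := by
  refine IsBigO.of_bound 1 ?_
  filter_upwards [self_mem_nhdsWithin] with t ht
  rw [neg_zero, Real.rpow_zero, norm_one, mul_one, truncatedKernel]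
  exact (norm_indicator_le_norm_self _ _).trans (norm_one_add_mul_inv_le_one hr ht)

theorem truncatedKernel_isBigO_atTop (r b : ℝ) : truncatedKernel r =O[atTop] (· ^ (-b)) := by
  refine (EventuallyEq.trans_isBigO ?_ (isBigO_zero _ _))
  filter_upwards [eventually_gt_atTop 1] with t ht
  exact indicator_of_notMem (fun h => ht.not_ge h.2) _

theorem mellinConvergent_truncatedKernel (hr : 0 < r) (hw : 0 < w.re) :
    MellinConvergent (truncatedKernel r) w :=
  mellinConvergent_of_isBigO_rpow (locallyIntegrableOn_truncatedKernel hr)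
    (truncatedKernel_isBigO_atTop r (w.re + 1)) (by linarith) (truncatedKernel_isBigO_zero hr) hw

theorem differentiableAt_truncatedBeta (hr : 0 < r) (hw : 0 < w.re) :
    DifferentiableAt ℂ (truncatedBeta r) w :=
  mellin_differentiableAt_of_isBigO_rpow (locallyIntegrableOn_truncatedKernel hr)
    (truncatedKernel_isBigO_atTop r (w.re + 1)) (by linarith) (truncatedKernel_isBigO_zero hr) hw

theorem norm_truncatedBeta_le_of_kernel_le {M b : ℝ} (hb : b < w.re)
    (hker : ∀ t ∈ Ioc (0 : ℝ) 1, ‖((1 + r * t : ℝ) : ℂ)⁻¹‖ ≤ M * t ^ (-b)) :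
    ‖truncatedBeta r w‖ ≤ M / (w.re - b) := by
  have hexp : -1 < w.re - 1 - b := by linarith
  have hvalue : ∫ t in Ioc (0 : ℝ) 1, M * t ^ (w.re - 1 - b) = M / (w.re - b) := by
    rw [← intervalIntegral.integral_of_le zero_le_one, intervalIntegral.integral_const_mul,
      integral_rpow (Or.inl hexp), Real.one_rpow, Real.zero_rpow (by linarith)]
    ring_nf
  rw [truncatedBeta_eq_setIntegral, ← hvalue]
  refine norm_integral_le_of_norm_le ?_ ?_
  · have := intervalIntegral.intervalIntegrable_rpow' (a := 0) (b := 1) hexp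
    exact ((intervalIntegrable_iff_integrableOn_Ioc_of_le zero_le_one).1 this).const_mul M
  · filter_upwards [ae_restrict_mem measurableSet_Ioc] with t ht
    rw [norm_mul, Complex.norm_cpow_eq_rpow_re_of_pos ht.1, Complex.sub_re, Complex.one_re,
      show w.re - 1 - b = (w.re - 1) + -b by ring, Real.rpow_add ht.1, mul_left_comm]
    exact mul_le_mul_of_nonneg_left (hker t ht) (Real.rpow_nonneg ht.1.le _)

theorem norm_truncatedBeta_le (hr : 0 < r) (hw : 0 < w.re) : ‖truncatedBeta r w‖ ≤ 1 / w.re := by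
  simpa using norm_truncatedBeta_le_of_kernel_le (M := 1) hw fun t ht => by
    simpa using norm_one_add_mul_inv_le_one hr ht.1

theorem norm_truncatedBeta_le_rpow (hr : 0 < r) (hw : 1 / 2 < w.re) :
    ‖truncatedBeta r w‖ ≤ r ^ (-(1 / 2) : ℝ) / (w.re - 1 / 2) :=
  norm_truncatedBeta_le_of_kernel_le hw fun _ ht => norm_one_add_mul_inv_le_rpow hr ht.1

theorem truncatedBeta_eq_sub (hr : 0 < r) (hw : 0 < w.re) :
    truncatedBeta r w = 1 / w - r * truncatedBeta r (w + 1) := by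
  have hshift : MellinConvergent (fun t : ℝ => (t : ℂ) ^ (1 : ℂ) • truncatedKernel r t) w :=
    MellinConvergent.cpow_smul.2 <| mellinConvergent_truncatedKernel hr <| by simp; linarith
  have hone := hasMellin_one_Ioc hw
  rw [← hone.2, truncatedBeta, truncatedBeta, ← mellin_cpow_smul, ← smul_eq_mul,
    ← mellin_const_smul, ← (hasMellin_sub hone.1 (hshift.const_smul (r : ℂ))).2]
  congr 1
  ext t
  by_cases ht : t ∈ Ioc (0 : ℝ) 1
  · have := one_add_mul_ne_zero hr ht.1
    simp only [truncatedKernel, indicator_of_mem ht, Complex.cpow_one, smul_eq_mul]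
    push_cast
    field_simp
    ring
  · simp [truncatedKernel, indicator_of_notMem ht]

theorem truncatedBeta_eq_sum_add (hr : 0 < r) (N : ℕ) (hw : 0 < w.re) :
    truncatedBeta r w =
      ∑ n ∈ Finset.range N, (-r : ℂ) ^ n / (n + w) + (-r : ℂ) ^ N * truncatedBeta r (w + N) := by
  induction N with
  | zero => simp
  | succ N ih =>
    have hwN : 0 < (w + N).re := by
      rw [Complex.add_re, Complex.natCast_re]
      positivity
    rw [ih, Finset.sum_range_succ, truncatedBeta_eq_sub hr hwN]
    simp only [add_comm _ w, Nat.cast_succ]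
    ring_nf

-- The part of the full integral over `t > 1` is turned into a truncated one by `t ↦ 1 / t`.
theorem one_add_mul_inv_ae_eq (hr : 0 < r) :
    (fun t : ℝ => ((1 + r * t : ℝ) : ℂ)⁻¹) =ᵐ[volume.restrict (Ioi 0)] fun t =>
      truncatedKernel r t +
        (r : ℂ)⁻¹ • (((t⁻¹ : ℝ) : ℂ) ^ (1 : ℂ) • truncatedKernel r⁻¹ t⁻¹) := by
  have hne : ∀ᵐ t : ℝ ∂volume.restrict (Ioi 0), t ≠ 1 :=
    ae_restrict_of_ae (Measure.ae_ne volume 1)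
  filter_upwards [ae_restrict_mem measurableSet_Ioi, hne] with t (ht : 0 < t) ht1
  rcases ht1.lt_or_gt with hlt | hgt
  · have hinv : t⁻¹ ∉ Ioc (0 : ℝ) 1 := fun h => ((one_lt_inv₀ ht).2 hlt).not_ge h.2
    simp [truncatedKernel, indicator_of_mem (show t ∈ Ioc (0 : ℝ) 1 from ⟨ht, hlt.le⟩),
      indicator_of_notMem hinv]
  · have hinv : t⁻¹ ∈ Ioc (0 : ℝ) 1 := ⟨inv_pos.2 ht, (inv_lt_one_of_one_lt₀ hgt).le⟩
    have hrt := one_add_mul_ne_zero hr ht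
    have hrt' : (r : ℂ) * t + 1 ≠ 0 := by rwa [add_comm]
    have hr0 : (r : ℂ) ≠ 0 := by exact_mod_cast hr.ne'
    have ht0 : (t : ℂ) ≠ 0 := by exact_mod_cast ht.ne'
    simp only [truncatedKernel, indicator_of_mem hinv,
      indicator_of_notMem (show t ∉ Ioc (0 : ℝ) 1 from fun h => hgt.not_ge h.2),
      Complex.cpow_one, smul_eq_mul, zero_add]
    push_cast
    field_simp
    ring

theorem truncatedBeta_add_truncatedBeta_inv (hr : 0 < r) (h0 : 0 < w.re) (h1 : w.re < 1) :
    truncatedBeta r w + (r : ℂ)⁻¹ * truncatedBeta r⁻¹ (1 - w) =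
      (r : ℂ) ^ (-w) * (Real.pi / Complex.sin (Real.pi * w)) := by
  let g : ℝ → ℂ := fun x => (x : ℂ) ^ (1 : ℂ) • truncatedKernel r⁻¹ x
  have hg : MellinConvergent (fun t : ℝ => g t⁻¹) w := by
    have := (MellinConvergent.comp_rpow (f := g) (s := w) (a := -1) (by norm_num)).2 <|
      MellinConvergent.cpow_smul.2 <| mellinConvergent_truncatedKernel (inv_pos.2 hr) <| by
        simpa [div_neg] using h1
    simpa only [Real.rpow_neg_one] using this
  have hg_eq : mellin (fun t : ℝ => g t⁻¹) w = truncatedBeta r⁻¹ (1 - w) := by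
    rw [mellin_comp_inv, mellin_cpow_smul, truncatedBeta, neg_add_eq_sub]
  have hsum := hasMellin_add (mellinConvergent_truncatedKernel hr h0)
    (hg.const_smul (r : ℂ)⁻¹)
  rw [← mellin_one_add_inv h0 h1, ← smul_eq_mul ((r : ℂ) ^ (-w)),
    ← mellin_comp_mul_left (fun t : ℝ => ((1 + t : ℝ) : ℂ)⁻¹) w hr, ← hg_eq, truncatedBeta,
    ← smul_eq_mul, ← mellin_const_smul, ← hsum.2]
  refine (integral_congr_ae ?_).symm
  filter_upwards [one_add_mul_inv_ae_eq hr] with t ht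
  rw [ht]

end TruncatedBeta

section CuspTerms

theorem image_div_mul_sq_sub_Ioi {k c q : ℝ} (hk : 0 < k) (hc : 0 ≤ c)
    (hM : 0 < k ^ 2 * c ^ 2 - q) :
    (fun u : ℝ => (k ^ 2 * c ^ 2 - q) / (k ^ 2 * u ^ 2 - q)) '' Ioi c = Ioo 0 1 := by
  ext t
  simp only [mem_image, mem_Ioi, mem_Ioo]
  constructor
  · rintro ⟨u, hu, rfl⟩
    have hlt : k ^ 2 * c ^ 2 < k ^ 2 * u ^ 2 := by gcongr
    exact ⟨div_pos hM (by linarith), (div_lt_one (by linarith)).2 (by linarith)⟩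
  · rintro ⟨ht0, ht1⟩
    have hlt : k ^ 2 * c ^ 2 - q < (k ^ 2 * c ^ 2 - q) / t :=
      (lt_div_iff₀ ht0).2 (by nlinarith)
    have : k ^ 2 * c ^ 2 < (k ^ 2 * c ^ 2 - q) / t + q := by linarith
    have hnonneg : 0 ≤ k ^ 2 * c ^ 2 := by positivity
    refine ⟨√(((k ^ 2 * c ^ 2 - q) / t + q) / k ^ 2), Real.lt_sqrt_of_sq_lt ?_, ?_⟩
    · rw [lt_div_iff₀ (by positivity)]
      linarith
    · rw [Real.sq_sqrt (div_nonneg (by linarith) (by positivity)),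
        mul_div_cancel₀ _ (by positivity), add_sub_cancel_right, div_div_cancel₀ hM.ne']

theorem substitution_integrand_eq {k u B M Q : ℝ} (hk : k ≠ 0) (huB : u ^ 2 + B ≠ 0)
    (hM : 0 < M) (hQ : 0 < Q) (s : ℂ) :
    (Q : ℂ) ^ (-s) * ((u / (u ^ 2 + B) : ℝ) : ℂ) = 1 / 2 * (M : ℂ) ^ (-s) *
      ((2 * k ^ 2 * u * M / Q ^ 2) •
        (((M / Q : ℝ) : ℂ) ^ (s - 1) * ((k ^ 2 * (u ^ 2 + B) / Q : ℝ) : ℂ)⁻¹)) := by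
  have hk0 : (k : ℂ) ≠ 0 := by exact_mod_cast hk
  have hM0 : (M : ℂ) ≠ 0 := by exact_mod_cast hM.ne'
  have hQ0 : (Q : ℂ) ≠ 0 := by exact_mod_cast hQ.ne'
  have huB0 : (u ^ 2 + B : ℂ) ≠ 0 := by exact_mod_cast huB
  have hMs : (M : ℂ) ^ s ≠ 0 := by simp [Complex.cpow_eq_zero_iff, hM0]
  have hQs : (Q : ℂ) ^ s ≠ 0 := by simp [Complex.cpow_eq_zero_iff, hQ0]
  rw [Complex.ofReal_div M Q, Complex.div_cpow_ofReal_nonneg hM.le hQ.le,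
    Complex.cpow_sub _ _ hM0, Complex.cpow_sub _ _ hQ0, Complex.cpow_neg, Complex.cpow_neg,
    Complex.cpow_one, Complex.cpow_one, Complex.real_smul]
  push_cast
  field_simp

-- The substitution is `t = (k² c² - q) / (k² u² - q)`.
theorem integral_Ioi_cpow_mul_div_eq_truncatedBeta {k c q B : ℝ} (hk : 0 < k) (hc : 0 ≤ c)
    (hM : 0 < k ^ 2 * c ^ 2 - q) (hB : 0 < B) (s : ℂ) :
    ∫ u in Ioi c, ((k ^ 2 * u ^ 2 - q : ℝ) : ℂ) ^ (-s) * ((u / (u ^ 2 + B) : ℝ) : ℂ) =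
      1 / 2 * ((k ^ 2 * c ^ 2 - q : ℝ) : ℂ) ^ (-s) *
        truncatedBeta ((B * k ^ 2 + q) / (k ^ 2 * c ^ 2 - q)) s := by
  set M := k ^ 2 * c ^ 2 - q with hMdef
  have hQ (u : ℝ) (hu : u ∈ Ioi c) : 0 < k ^ 2 * u ^ 2 - q := by
    have : k ^ 2 * c ^ 2 < k ^ 2 * u ^ 2 := by have : c < u := hu; gcongr
    linarith
  have hderiv (u : ℝ) (hu : u ∈ Ioi c) : HasDerivWithinAt (fun u => M / (k ^ 2 * u ^ 2 - q))
      (-(2 * k ^ 2 * u * M / (k ^ 2 * u ^ 2 - q) ^ 2)) (Ioi c) u := by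
    convert! (((((hasDerivAt_pow 2 u).const_mul (k ^ 2)).sub_const q).fun_inv
      (hQ u hu).ne').const_mul M).hasDerivWithinAt using 1
    field_simp
    ring
  have hanti : AntitoneOn (fun u => M / (k ^ 2 * u ^ 2 - q)) (Ioi c) := fun u hu v _ huv => by
    have := hQ u hu
    have hu0 : 0 ≤ u := hc.trans (le_of_lt hu)
    dsimp only
    gcongr
  rw [truncatedBeta_eq_setIntegral, integral_Ioc_eq_integral_Ioo,
    ← image_div_mul_sq_sub_Ioi hk hc hM, ← hMdef,
    integral_image_eq_integral_deriv_smul_of_antitoneOn measurableSet_Ioi hderiv hanti,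
    ← integral_const_mul]
  refine setIntegral_congr_fun measurableSet_Ioi fun u hu => ?_
  have hker : 1 + (B * k ^ 2 + q) / M * (M / (k ^ 2 * u ^ 2 - q)) =
      k ^ 2 * (u ^ 2 + B) / (k ^ 2 * u ^ 2 - q) := by
    have := (hQ u hu).ne'
    field_simp
    ring
  rw [hker, neg_neg]
  exact substitution_integrand_eq hk.ne' (by positivity) hM (hQ u hu) s

/-- The value `k ^ (2 * δ) - 1 / 4` of `k² u² - 1/4` at the lower limit `u = k ^ (δ - 1)` of the
integral defining `cuspE0`, for a real index `k = x`. -/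
noncomputable def cutoff (δ x : ℝ) : ℝ :=
  x ^ (2 * δ) - 1 / 4

/-- The value `B k² + 1 / 4` of `-(k² u² - 1/4)` at the poles `u² = -B` of the integrand of
`cuspE0`, for a real index `k = x`. -/
noncomputable def shift (B x : ℝ) : ℝ :=
  B * x ^ 2 + 1 / 4

/-- The ratio of `cutoff` to `shift`: the small parameter of the problem. -/
noncomputable def ratio (B δ x : ℝ) : ℝ :=
  cutoff δ x / shift B x

/-- The integral `E_{0,k}(s)` after the change of variables that makes it a truncated beta
integral, with `B = (2 π a)²` and a real index `k = x`. -/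
noncomputable def cuspTerm (B δ x : ℝ) (s : ℂ) : ℂ :=
  -(Complex.sin (Real.pi * s) / (2 * Real.pi)) *
    ((cutoff δ x : ℂ) ^ (-s) * truncatedBeta (ratio B δ x)⁻¹ s)

/-- The factor of `sin (π s) / (2 π)` in the correction to the main term `-shift ^ (-s) / 2` of
`cuspTerm`. -/
noncomputable def cuspTail (B δ x : ℝ) (s : ℂ) : ℂ :=
  ratio B δ x * (cutoff δ x : ℂ) ^ (-s) * truncatedBeta (ratio B δ x) (1 - s)

variable {B δ x : ℝ} {s : ℂ}

theorem mul_rpow_le_cutoff (hδ : 0 ≤ δ) (hx : 1 ≤ x) : 3 / 4 * x ^ (2 * δ) ≤ cutoff δ x := by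
  have := Real.one_le_rpow hx (by positivity : 0 ≤ 2 * δ)
  rw [cutoff]
  linarith

theorem cutoff_pos (hδ : 0 ≤ δ) (hx : 1 ≤ x) : 0 < cutoff δ x :=
  (by positivity : 0 < 3 / 4 * x ^ (2 * δ)).trans_le (mul_rpow_le_cutoff hδ hx)

theorem cutoff_le_rpow (δ x : ℝ) : cutoff δ x ≤ x ^ (2 * δ) := by
  rw [cutoff]
  linarith

theorem shift_pos (hB : 0 ≤ B) (x : ℝ) : 0 < shift B x := by
  rw [shift]
  positivity

theorem mul_sq_le_shift (B x : ℝ) : B * x ^ 2 ≤ shift B x := by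
  rw [shift]
  linarith

theorem ratio_pos (hB : 0 ≤ B) (hδ : 0 ≤ δ) (hx : 1 ≤ x) : 0 < ratio B δ x :=
  div_pos (cutoff_pos hδ hx) (shift_pos hB x)

theorem cuspE0_eq_cuspTerm {a : ℝ} (ha : 0 < a) (hδ : 0 ≤ δ) {k : ℕ} (hk : 1 ≤ k) (s : ℂ) :
    cuspE0 a δ k s = cuspTerm ((2 * Real.pi * a) ^ 2) δ k s := by
  have hk1 : (1 : ℝ) ≤ k := by exact_mod_cast hk
  have hk0 : (0 : ℝ) < k := by linarith
  have hcut : (k : ℝ) ^ 2 * ((k : ℝ) ^ (δ - 1)) ^ 2 - 1 / 4 = cutoff δ k := by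
    rw [cutoff, ← mul_pow, mul_comm (k : ℝ), ← Real.rpow_add_one hk0.ne', sub_add_cancel,
      ← Real.rpow_mul_natCast hk0.le, mul_comm δ, Nat.cast_ofNat]
  rw [cuspE0, integral_Ioi_cpow_mul_div_eq_truncatedBeta hk0 (by positivity)
    (hcut ▸ cutoff_pos hδ hk1) (by have := Real.pi_pos; positivity), hcut, cuspTerm, ratio,
    inv_div, shift]
  ring

theorem sin_pi_mul_ne_zero_of_re_mem_Ioo (h0 : 0 < s.re) (h1 : s.re < 1) :
    Complex.sin (Real.pi * s) ≠ 0 := by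
  refine sin_pi_mul_ne_zero ?_
  rintro ⟨n, rfl⟩
  rw [Complex.intCast_re] at h0 h1
  have : 0 < n := by exact_mod_cast h0
  have : n < 1 := by exact_mod_cast h1
  lia

theorem cuspTerm_eq_add_cuspTail (hB : 0 ≤ B) (hδ : 0 ≤ δ) (hx : 1 ≤ x) (h0 : 0 < s.re)
    (h1 : s.re < 1) :
    cuspTerm B δ x s = -(1 / 2) * (shift B x : ℂ) ^ (-s) +
      Complex.sin (Real.pi * s) / (2 * Real.pi) * cuspTail B δ x s := by
  have hL := cutoff_pos hδ hx
  have hr := ratio_pos hB hδ hx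
  have hsin := sin_pi_mul_ne_zero_of_re_mem_Ioo h0 h1
  have hpi : (Real.pi : ℂ) ≠ 0 := by exact_mod_cast Real.pi_ne_zero
  have hreflect := truncatedBeta_add_truncatedBeta_inv (inv_pos.2 hr) h0 h1
  have hpow : (shift B x : ℂ) ^ (-s) =
      (cutoff δ x : ℂ) ^ (-s) * ((ratio B δ x)⁻¹ : ℝ) ^ (-s) := by
    rw [← Complex.mul_cpow_ofReal_nonneg hL.le (inv_pos.2 hr).le, ← Complex.ofReal_mul, ratio,
      inv_div, mul_div_cancel₀ _ hL.ne']
  rw [inv_inv, ← Complex.ofReal_inv, inv_inv, ← eq_sub_iff_add_eq] at hreflect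
  rw [cuspTerm, cuspTail, hreflect, hpow]
  field_simp
  ring

theorem cutoff_rpow_le_of_nonpos {p : ℝ} (hδ : 0 ≤ δ) (hx : 1 ≤ x) (hp : p ≤ 0) :
    cutoff δ x ^ p ≤ (3 / 4) ^ p * x ^ (2 * δ * p) := by
  have hx0 : 0 < x := by linarith
  rw [Real.rpow_mul hx0.le, ← Real.mul_rpow (by norm_num) (by positivity)]
  exact Real.rpow_le_rpow_of_nonpos (by positivity) (mul_rpow_le_cutoff hδ hx) hp

theorem shift_rpow_le_of_nonpos {p : ℝ} (hB : 0 < B) (hx : 0 < x) (hp : p ≤ 0) :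
    shift B x ^ p ≤ B ^ p * x ^ (2 * p) := by
  rw [Real.rpow_mul hx.le, ← Real.mul_rpow hB.le (by positivity), Real.rpow_two]
  exact Real.rpow_le_rpow_of_nonpos (by positivity) (mul_sq_le_shift B x) hp

theorem norm_cuspTerm_le (hB : 0 < B) (hδ : 0 ≤ δ) (hx : 1 ≤ x) (hs : 1 / 2 < s.re) :
    ‖cuspTerm B δ x s‖ ≤
      ‖Complex.sin (Real.pi * s) / (2 * Real.pi)‖ *
        (B ^ (-(1 / 2) : ℝ) * (3 / 4) ^ (1 / 2 - s.re) / (s.re - 1 / 2)) *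
        x ^ (-1 - 2 * δ * (s.re - 1 / 2)) := by
  have hx0 : 0 < x := by linarith
  have hL := cutoff_pos hδ hx
  have hC := shift_pos hB.le x
  have : 0 < s.re - 1 / 2 := by linarith
  rw [cuspTerm, norm_mul, norm_mul, norm_neg, Complex.norm_cpow_eq_rpow_re_of_pos hL,
    Complex.neg_re, mul_assoc]
  refine mul_le_mul_of_nonneg_left ?_ (norm_nonneg _)
  calc cutoff δ x ^ (-s.re) * ‖truncatedBeta (ratio B δ x)⁻¹ s‖
      ≤ cutoff δ x ^ (-s.re) * ((ratio B δ x)⁻¹ ^ (-(1 / 2) : ℝ) / (s.re - 1 / 2)) := by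
        gcongr
        exact norm_truncatedBeta_le_rpow (inv_pos.2 (ratio_pos hB.le hδ hx)) hs
    _ = cutoff δ x ^ (1 / 2 - s.re) * shift B x ^ (-(1 / 2) : ℝ) / (s.re - 1 / 2) := by
        rw [ratio, inv_div, Real.div_rpow hC.le hL.le, Real.rpow_neg hL.le (1 / 2), div_inv_eq_mul,
          sub_eq_add_neg (1 / 2) s.re, Real.rpow_add hL]
        ring
    _ ≤ (3 / 4) ^ (1 / 2 - s.re) * x ^ (2 * δ * (1 / 2 - s.re)) *
          (B ^ (-(1 / 2) : ℝ) * x ^ (2 * -(1 / 2) : ℝ)) / (s.re - 1 / 2) := by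
        gcongr
        · exact cutoff_rpow_le_of_nonpos hδ hx (by linarith)
        · exact shift_rpow_le_of_nonpos hB hx0 (by norm_num)
    _ = _ := by
        rw [sub_eq_add_neg (-1 : ℝ), Real.rpow_add hx0]
        ring_nf

theorem norm_cuspTail_le (hB : 0 < B) (hδ : 0 ≤ δ) (hx : 1 ≤ x) (hs : s.re < 1) :
    ‖cuspTail B δ x s‖ ≤ B⁻¹ * (1 - s.re)⁻¹ * x ^ (2 * δ * (1 - s.re) - 2) := by
  have hx0 : 0 < x := by linarith
  have hL := cutoff_pos hδ hx
  have := shift_pos hB.le x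
  have hr := ratio_pos hB.le hδ hx
  have : 0 < 1 - s.re := by linarith
  calc ‖cuspTail B δ x s‖
      = ratio B δ x * cutoff δ x ^ (-s.re) * ‖truncatedBeta (ratio B δ x) (1 - s)‖ := by
        rw [cuspTail, norm_mul, norm_mul, Complex.norm_cpow_eq_rpow_re_of_pos hL, Complex.neg_re,
          Complex.norm_real, Real.norm_of_nonneg hr.le]
    _ ≤ ratio B δ x * cutoff δ x ^ (-s.re) * (1 - s.re)⁻¹ := by
        gcongr
        simpa using norm_truncatedBeta_le hr (w := 1 - s) (by simpa using hs)
    _ = (shift B x)⁻¹ * (1 - s.re)⁻¹ * cutoff δ x ^ (1 - s.re) := by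
        rw [sub_eq_add_neg, Real.rpow_add hL, Real.rpow_one, ratio]
        ring
    _ ≤ (B * x ^ 2)⁻¹ * (1 - s.re)⁻¹ * (x ^ (2 * δ)) ^ (1 - s.re) := by
        gcongr
        · exact mul_sq_le_shift B x
        · exact cutoff_le_rpow δ x
    _ = _ := by
        rw [Real.rpow_sub hx0, ← Real.rpow_mul hx0.le, mul_inv]
        norm_cast
        ring

theorem differentiable_ofReal_cpow_neg {y : ℝ} (hy : 0 < y) :
    Differentiable ℂ fun s : ℂ => (y : ℂ) ^ (-s) := fun _ =>
  differentiableAt_id.neg.const_cpow (Or.inl (by exact_mod_cast hy.ne'))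

theorem differentiableAt_cuspTerm (hB : 0 ≤ B) (hδ : 0 ≤ δ) (hx : 1 ≤ x) (hs : 0 < s.re) :
    DifferentiableAt ℂ (cuspTerm B δ x) s := by
  have hsin : DifferentiableAt ℂ (fun s : ℂ => -(Complex.sin (Real.pi * s) / (2 * Real.pi))) s := by
    fun_prop
  exact hsin.mul ((differentiable_ofReal_cpow_neg (cutoff_pos hδ hx) s).mul
    (differentiableAt_truncatedBeta (inv_pos.2 (ratio_pos hB hδ hx)) hs))

theorem differentiableAt_cuspTail (hB : 0 ≤ B) (hδ : 0 ≤ δ) (hx : 1 ≤ x) (hs : s.re < 1) :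
    DifferentiableAt ℂ (cuspTail B δ x) s := by
  have hbeta : DifferentiableAt ℂ (fun s => truncatedBeta (ratio B δ x) (1 - s)) s :=
    (differentiableAt_truncatedBeta (ratio_pos hB hδ hx) (by simpa using hs)).comp s
      (differentiableAt_id.const_sub 1)
  exact ((differentiable_ofReal_cpow_neg (cutoff_pos hδ hx) s).const_mul _).mul hbeta

end CuspTerms

section HalfPlane

theorem summable_nat_add_one_rpow {p : ℝ} (hp : p < -1) :
    Summable fun k : ℕ => ((k + 1 : ℕ) : ℝ) ^ p :=
  (summable_nat_add_iff 1).2 (Real.summable_nat_rpow.2 hp)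

theorem one_le_cast_add_one (k : ℕ) : (1 : ℝ) ≤ ((k + 1 : ℕ) : ℝ) := by
  exact_mod_cast k.succ_pos

theorem summableLocallyUniformlyOn_of_norm_le_mul {U : Set ℂ} (hU : IsOpen U) {f : ℕ → ℂ → ℂ}
    {W : ℂ → ℝ} {u : ℕ → ℝ} (hW : ContinuousOn W U) (hu : Summable u) (hu0 : ∀ k, 0 ≤ u k)
    (hf : ∀ k, ∀ s ∈ U, ‖f k s‖ ≤ W s * u k) : SummableLocallyUniformlyOn f U := by
  refine SummableLocallyUniformlyOn_of_locally_bounded hU fun K hKU hK => ?_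
  obtain ⟨M, hM⟩ := hK.exists_bound_of_continuousOn (hW.mono hKU)
  refine ⟨fun k => M * u k, hu.mul_left M, fun k s hs => (hf k s (hKU hs)).trans ?_⟩
  exact mul_le_mul_of_nonneg_right ((le_abs_self _).trans (hM s hs)) (hu0 k)

/-- The series `∑_{k ≥ 1} E_{0,k}(s)` in terms of `cuspTerm`; meaningful for `Re s > 1/2`. -/
noncomputable def cuspZeta (B δ : ℝ) (s : ℂ) : ℂ :=
  ∑' k : ℕ, cuspTerm B δ (k + 1 : ℕ) s

variable {B δ : ℝ}

theorem summable_norm_cuspTerm (hB : 0 < B) (hδ : 0 < δ) {s : ℂ} (hs : 1 / 2 < s.re) :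
    Summable fun k : ℕ => ‖cuspTerm B δ (k + 1 : ℕ) s‖ := by
  have hexp : -1 - 2 * δ * (s.re - 1 / 2) < -1 := by
    have := mul_pos hδ (sub_pos.2 hs)
    linarith
  exact ((summable_nat_add_one_rpow hexp).mul_left _).of_nonneg_of_le (fun _ => norm_nonneg _)
    fun k => norm_cuspTerm_le hB hδ.le (one_le_cast_add_one k) hs

theorem summableLocallyUniformlyOn_cuspTerm_of_lt_re (hB : 0 < B) (hδ : 0 < δ) {σ : ℝ}
    (hσ : 1 / 2 < σ) :
    SummableLocallyUniformlyOn (fun (k : ℕ) s => cuspTerm B δ (k + 1 : ℕ) s) {s | σ < s.re} := by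
  have hexp : -1 - 2 * δ * (σ - 1 / 2) < -1 := by
    have := mul_pos hδ (sub_pos.2 hσ)
    linarith
  refine summableLocallyUniformlyOn_of_norm_le_mul
    (isOpen_lt continuous_const Complex.continuous_re)
    (W := fun s => ‖Complex.sin (Real.pi * s) / (2 * Real.pi)‖ *
      (B ^ (-(1 / 2) : ℝ) * (3 / 4) ^ (1 / 2 - s.re) / (s.re - 1 / 2))) ?_
    (summable_nat_add_one_rpow hexp) (fun k => by positivity) fun k s (hs : σ < s.re) => ?_
  · have hpow : Continuous fun s : ℂ => (3 / 4 : ℝ) ^ (1 / 2 - s.re) :=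
      (Real.continuous_const_rpow (by norm_num)).comp (by fun_prop)
    refine ContinuousOn.mul (by fun_prop)
      ((continuous_const.mul hpow).continuousOn.div (by fun_prop) ?_)
    intro s (hs : σ < s.re)
    linarith
  · refine (norm_cuspTerm_le hB hδ.le (one_le_cast_add_one k) (hσ.trans hs)).trans ?_
    have hsub : 0 < s.re - 1 / 2 := by linarith
    gcongr
    exact one_le_cast_add_one k

theorem tendstoLocallyUniformlyOn_cuspZeta (hB : 0 < B) (hδ : 0 < δ) :
    TendstoLocallyUniformlyOn
      (fun (n : ℕ) s => ∑ k ∈ Finset.range n, cuspTerm B δ (k + 1 : ℕ) s)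
      (cuspZeta B δ) atTop {s | 1 / 2 < s.re} := by
  have hcover : {s : ℂ | 1 / 2 < s.re} = ⋃ σ : Ioi (1 / 2 : ℝ), {s : ℂ | σ.1 < s.re} := by
    ext s
    simp only [mem_ofPred_eq, mem_iUnion, Subtype.exists, exists_prop, mem_Ioi]
    exact ⟨fun hs => exists_between hs, fun ⟨σ, hσ, hs⟩ => hσ.trans hs⟩
  rw [hcover]
  refine tendstoLocallyUniformlyOn_iUnion
    (fun σ => isOpen_lt continuous_const Complex.continuous_re) fun σ => ?_
  exact (summableLocallyUniformlyOn_cuspTerm_of_lt_re hB hδ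
    σ.2).hasSumLocallyUniformlyOn.tendstoLocallyUniformlyOn_finsetRange

theorem differentiableOn_cuspZeta (hB : 0 < B) (hδ : 0 < δ) :
    DifferentiableOn ℂ (cuspZeta B δ) {s | 1 / 2 < s.re} := by
  refine (tendstoLocallyUniformlyOn_cuspZeta hB hδ).differentiableOn (.of_forall fun n => ?_)
    (isOpen_lt continuous_const Complex.continuous_re)
  refine DifferentiableOn.fun_sum fun k _ s (hs : 1 / 2 < s.re) => ?_
  exact (differentiableAt_cuspTerm hB.le hδ.le (one_le_cast_add_one k)
    (by linarith)).differentiableWithinAt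

end HalfPlane

section PowerExpansions

/-- The power `n ^ (-γ)` of the summation index `n = k + 1`, as a function of a pair `(k, s)`. -/
noncomputable def indexPow (γ : ℝ) (q : ℕ × ℂ) : ℝ :=
  ((q.1 + 1 : ℕ) : ℝ) ^ (-γ)

theorem indexPow_pos (γ : ℝ) (q : ℕ × ℂ) : 0 < indexPow γ q :=
  Real.rpow_pos_of_pos (by positivity) _

theorem indexPow_zero (q : ℕ × ℂ) : indexPow 0 q = 1 := by
  rw [indexPow, neg_zero, Real.rpow_zero]

theorem indexPow_add (γ γ' : ℝ) (q : ℕ × ℂ) :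
    indexPow (γ + γ') q = indexPow γ q * indexPow γ' q := by
  rw [indexPow, neg_add, Real.rpow_add (by positivity), indexPow, indexPow]

theorem indexPow_pow (γ : ℝ) (N : ℕ) (q : ℕ × ℂ) : indexPow γ q ^ N = indexPow (γ * N) q := by
  rw [indexPow, indexPow, ← Real.rpow_natCast, ← Real.rpow_mul (by positivity), neg_mul]

theorem indexPow_le_indexPow {γ γ' : ℝ} (h : γ' ≤ γ) (q : ℕ × ℂ) :
    indexPow γ q ≤ indexPow γ' q :=
  Real.rpow_le_rpow_of_exponent_le (one_le_cast_add_one q.1) (neg_le_neg h)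

theorem indexPow_isBigO_indexPow {γ γ' : ℝ} (h : γ' ≤ γ) (l : Filter (ℕ × ℂ)) :
    indexPow γ =O[l] indexPow γ' :=
  .of_norm_le fun q => by
    rw [Real.norm_of_nonneg (indexPow_pos _ q).le]
    exact indexPow_le_indexPow h q

theorem indexPow_isBigO_one {γ : ℝ} (h : 0 ≤ γ) (l : Filter (ℕ × ℂ)) :
    indexPow γ =O[l] fun _ => (1 : ℝ) := by
  simpa only [funext indexPow_zero] using indexPow_isBigO_indexPow h l

/-- A bounded holomorphic function on `U`, as coefficient of an asymptotic expansion. -/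
structure IsCoefficient (U : Set ℂ) (c : ℂ → ℂ) : Prop where
  differentiableOn : DifferentiableOn ℂ c U
  isBigO_one : c =O[𝓟 U] fun _ => (1 : ℝ)

/-- The finite sums `∑ⱼ cⱼ(s) n ^ (-γⱼ)`, `γⱼ ≥ 0`, with coefficients `cⱼ` on `U`. -/
inductive IsPowerSum (U : Set ℂ) : (ℕ × ℂ → ℂ) → Prop
  | term {c : ℂ → ℂ} {γ : ℝ} (hc : IsCoefficient U c) (hγ : 0 ≤ γ) :
      IsPowerSum U fun q => c q.2 * indexPow γ q
  | add {p p' : ℕ × ℂ → ℂ} (hp : IsPowerSum U p) (hp' : IsPowerSum U p') :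
      IsPowerSum U fun q => p q + p' q

/-- `f(k, s)` has an asymptotic expansion in powers of `n = k + 1`, to any order, with coefficients
on `U` and uniformly for `s ∈ U` and all `k`. -/
def HasPowerExpansion (U : Set ℂ) (f : ℕ × ℂ → ℂ) : Prop :=
  ∀ M : ℝ, ∃ p, IsPowerSum U p ∧ (fun q => f q - p q) =O[𝓟 (univ ×ˢ U)] indexPow M

variable {U : Set ℂ} {c d : ℂ → ℂ} {p p' f g : ℕ × ℂ → ℂ}

theorem isBigO_one_comp_snd (hc : c =O[𝓟 U] fun _ => (1 : ℝ)) :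
    (fun q : ℕ × ℂ => c q.2) =O[𝓟 (univ ×ˢ U)] fun _ => (1 : ℝ) :=
  hc.comp_tendsto (tendsto_principal_principal.2 fun _ hq => hq.2)

theorem IsCoefficient.const (U : Set ℂ) (a : ℂ) : IsCoefficient U fun _ => a :=
  ⟨differentiableOn_const a, isBigO_const_const a one_ne_zero _⟩

theorem IsCoefficient.mul (hc : IsCoefficient U c) (hd : IsCoefficient U d) :
    IsCoefficient U fun s => c s * d s :=
  ⟨hc.differentiableOn.mul hd.differentiableOn, by
    simpa only [mul_one] using hc.isBigO_one.mul hd.isBigO_one⟩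

theorem IsCoefficient.of_differentiable (hU : Bornology.IsBounded U) (hc : Differentiable ℂ c) :
    IsCoefficient U c := by
  refine ⟨hc.differentiableOn, ?_⟩
  obtain ⟨K, hK⟩ := hU.isCompact_closure.exists_bound_of_continuousOn hc.continuous.continuousOn
  exact isBigO_principal.2 ⟨K, fun s hs => by simpa using hK s (subset_closure hs)⟩

theorem IsPowerSum.mul (hp : IsPowerSum U p) (hp' : IsPowerSum U p') :
    IsPowerSum U fun q => p q * p' q := by
  induction hp with
  | add _ _ ih ih' => simpa only [add_mul] using ih.add ih'
  | @term c γ hc hγ =>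
    induction hp' with
    | add _ _ ih ih' => simpa only [mul_add] using ih.add ih'
    | @term d γ' hd hγ' =>
      convert! IsPowerSum.term (hc.mul hd) (add_nonneg hγ hγ') using 2 with q
      simp only [indexPow_add, Complex.ofReal_mul]
      ring

theorem IsPowerSum.isBigO_one (hp : IsPowerSum U p) :
    p =O[𝓟 (univ ×ˢ U)] fun _ => (1 : ℝ) := by
  induction hp with
  | add _ _ ih ih' => exact ih.add ih'
  | term hc hγ =>
    have hpow := Complex.isBigO_ofReal_left.2 (indexPow_isBigO_one hγ (𝓟 (univ ×ˢ U)))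
    simpa only [mul_one] using (isBigO_one_comp_snd hc.isBigO_one).mul hpow

theorem IsPowerSum.differentiableOn (hp : IsPowerSum U p) (k : ℕ) :
    DifferentiableOn ℂ (fun s => p (k, s)) U := by
  induction hp with
  | add _ _ ih ih' => exact ih.add ih'
  | @term c γ hc _ => exact hc.differentiableOn.mul_const (indexPow γ (k, 0) : ℂ)

theorem IsPowerSum.hasPowerExpansion (hp : IsPowerSum U p) : HasPowerExpansion U p :=
  fun M => ⟨p, hp, by simpa only [sub_self] using isBigO_zero (indexPow M) _⟩

theorem IsCoefficient.hasPowerExpansion (hc : IsCoefficient U c) :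
    HasPowerExpansion U fun q => c q.2 := by
  simpa only [indexPow_zero, Complex.ofReal_one, mul_one] using
    (IsPowerSum.term hc le_rfl).hasPowerExpansion

theorem hasPowerExpansion_indexPow {γ : ℝ} (U : Set ℂ) (hγ : 0 ≤ γ) :
    HasPowerExpansion U fun q => (indexPow γ q : ℂ) := by
  simpa only [one_mul] using (IsPowerSum.term (IsCoefficient.const U 1) hγ).hasPowerExpansion

theorem HasPowerExpansion.of_forall_approx
    (h : ∀ M : ℝ, ∃ g, HasPowerExpansion U g ∧ (fun q => f q - g q) =O[𝓟 (univ ×ˢ U)] indexPow M) :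
    HasPowerExpansion U f := fun M => by
  obtain ⟨g, hg, hfg⟩ := h M
  obtain ⟨p, hp, hgp⟩ := hg M
  exact ⟨p, hp, by simpa only [sub_add_sub_cancel] using hfg.add hgp⟩

theorem HasPowerExpansion.isBigO_one (hf : HasPowerExpansion U f) :
    f =O[𝓟 (univ ×ˢ U)] fun _ => (1 : ℝ) := by
  obtain ⟨p, hp, hfp⟩ := hf 0
  simpa only [sub_add_cancel] using (hfp.trans (indexPow_isBigO_one le_rfl _)).add hp.isBigO_one

theorem HasPowerExpansion.add (hf : HasPowerExpansion U f) (hg : HasPowerExpansion U g) :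
    HasPowerExpansion U fun q => f q + g q := fun M => by
  obtain ⟨p, hp, hfp⟩ := hf M
  obtain ⟨p', hp', hgp'⟩ := hg M
  exact ⟨_, hp.add hp', by simpa only [add_sub_add_comm] using hfp.add hgp'⟩

theorem HasPowerExpansion.mul (hf : HasPowerExpansion U f) (hg : HasPowerExpansion U g) :
    HasPowerExpansion U fun q => f q * g q := fun M => by
  obtain ⟨p, hp, hfp⟩ := hf M
  obtain ⟨p', hp', hgp'⟩ := hg M
  refine ⟨_, hp.mul hp', ?_⟩
  have hleft : (fun q => (f q - p q) * g q) =O[𝓟 (univ ×ˢ U)] indexPow M := by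
    simpa only [mul_one] using hfp.mul hg.isBigO_one
  have hright : (fun q => p q * (g q - p' q)) =O[𝓟 (univ ×ˢ U)] indexPow M := by
    simpa only [one_mul] using hp.isBigO_one.mul hgp'
  refine (hleft.add hright).congr_left fun q => ?_
  ring

theorem HasPowerExpansion.pow (hf : HasPowerExpansion U f) (n : ℕ) :
    HasPowerExpansion U fun q => f q ^ n := by
  induction n with
  | zero => simpa only [pow_zero] using (IsCoefficient.const U 1).hasPowerExpansion
  | succ n ih => simpa only [pow_succ] using ih.mul hf

theorem HasPowerExpansion.sum {F : ℕ → ℕ × ℂ → ℂ} (hF : ∀ n, HasPowerExpansion U (F n)) (N : ℕ) :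
    HasPowerExpansion U fun q => ∑ n ∈ Finset.range N, F n q := by
  induction N with
  | zero => simpa only [Finset.sum_range_zero] using (IsCoefficient.const U 0).hasPowerExpansion
  | succ N ih => simpa only [Finset.sum_range_succ] using ih.add (hF N)

theorem HasPowerExpansion.of_taylor {r : ℕ × ℂ → ℂ} {γ : ℝ} {c : ℕ → ℂ → ℂ} (hγ : 0 < γ)
    (hr : HasPowerExpansion U r) (hrγ : r =O[𝓟 (univ ×ˢ U)] indexPow γ)
    (hc : ∀ n, IsCoefficient U (c n))
    (hf : ∀ N, (fun q => f q - ∑ n ∈ Finset.range N, c n q.2 * r q ^ n)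
      =O[𝓟 (univ ×ˢ U)] fun q => r q ^ N) :
    HasPowerExpansion U f := by
  refine .of_forall_approx fun M => ?_
  obtain ⟨N, hN⟩ := exists_nat_ge (M / γ)
  refine ⟨_, .sum (fun n => (hc n).hasPowerExpansion.mul (hr.pow n)) N, ?_⟩
  have hpow : (fun q => r q ^ N) =O[𝓟 (univ ×ˢ U)] indexPow (γ * N) := by
    simpa only [indexPow_pow] using hrγ.pow N
  have hMN : M ≤ γ * N := by rwa [div_le_iff₀' hγ] at hN
  exact (hf N).trans (hpow.trans (indexPow_isBigO_indexPow hMN _))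

end PowerExpansions

section ZetaContinuation

theorem hasSum_nat_add_one_cpow_neg {w : ℂ} (hw : 1 < w.re) :
    HasSum (fun k : ℕ => ((k + 1 : ℕ) : ℂ) ^ (-w)) (riemannZeta w) := by
  have hsum : Summable fun k : ℕ => 1 / ((k + 1 : ℕ) : ℂ) ^ w :=
    (summable_nat_add_iff 1).2 (Complex.summable_one_div_nat_cpow.2 hw)
  convert! hsum.hasSum using 1
  · exact funext fun k => by rw [Complex.cpow_neg, one_div]
  · simp only [zeta_eq_tsum_one_div_nat_add_one_cpow hw, Nat.cast_add, Nat.cast_one]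

theorem meromorphicAt_riemannZeta (z : ℂ) : MeromorphicAt riemannZeta z := by
  have hpole : MeromorphicAt (fun s => (s - 1)⁻¹ + riemannZeta₀ s) z :=
    (by fun_prop : MeromorphicAt (fun s : ℂ => (s - 1)⁻¹) z).add
      (differentiable_riemannZeta₀.analyticAt z).meromorphicAt
  refine hpole.congr ?_
  rcases eq_or_ne z 1 with rfl | hz
  · filter_upwards [self_mem_nhdsWithin] with s hs using (riemannZeta_eq_inv_sub_add hs).symm
  · filter_upwards [eventually_nhdsWithin_of_eventually_nhds (eventually_ne_nhds hz)] with s hs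
    exact (riemannZeta_eq_inv_sub_add hs).symm

theorem analyticAt_riemannZeta {s : ℂ} (hs : s ≠ 1) : AnalyticAt ℂ riemannZeta s :=
  DifferentiableOn.analyticAt (s := {1}ᶜ)
    (fun _ hw => (differentiableAt_riemannZeta hw).differentiableWithinAt)
    (isOpen_compl_singleton.mem_nhds hs)

variable {U : Set ℂ} {e : ℂ → ℂ} {p f : ℕ × ℂ → ℂ}

theorem norm_nat_add_one_cpow (k : ℕ) (w : ℂ) :
    ‖((k + 1 : ℕ) : ℂ) ^ w‖ = ((k + 1 : ℕ) : ℝ) ^ w.re :=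
  Complex.norm_natCast_cpow_of_pos k.succ_pos w

theorem indexPow_eq_cpow_neg (γ : ℝ) (q : ℕ × ℂ) :
    (indexPow γ q : ℂ) = ((q.1 + 1 : ℕ) : ℂ) ^ (-(γ : ℂ)) := by
  rw [indexPow, Complex.ofReal_cpow (by positivity), Complex.ofReal_neg, Complex.ofReal_natCast]

theorem nat_add_one_cpow_neg_mul_indexPow (k : ℕ) (w s : ℂ) (γ : ℝ) :
    ((k + 1 : ℕ) : ℂ) ^ (-w) * indexPow γ (k, s) = ((k + 1 : ℕ) : ℂ) ^ (-(w + γ)) := by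
  have hk : ((k + 1 : ℕ) : ℂ) ≠ 0 := Nat.cast_ne_zero.2 k.succ_ne_zero
  rw [indexPow_eq_cpow_neg, neg_add, Complex.cpow_add _ _ hk]

theorem IsPowerSum.exists_meromorphicOn_hasSum (hU : IsOpen U) (he : DifferentiableOn ℂ e U)
    (hp : IsPowerSum U p) :
    ∃ G, MeromorphicOn G U ∧ ∀ s ∈ U, 1 < (e s).re →
      HasSum (fun k : ℕ => ((k + 1 : ℕ) : ℂ) ^ (-e s) * p (k, s)) (G s) := by
  induction hp with
  | add _ _ ih ih' =>
    obtain ⟨G, hG, hsum⟩ := ih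
    obtain ⟨G', hG', hsum'⟩ := ih'
    refine ⟨G + G', hG.add hG', fun s hs h1 => ?_⟩
    simpa only [mul_add, Pi.add_apply] using (hsum s hs h1).add (hsum' s hs h1)
  | @term c γ hc hγ =>
    refine ⟨fun s => c s * riemannZeta (e s + γ), fun s hs => ?_, fun s _ h1 => ?_⟩
    · have hUs := hU.mem_nhds hs
      have harg : AnalyticAt ℂ (fun s => e s + γ) s := (he.analyticAt hUs).add analyticAt_const
      exact (hc.differentiableOn.analyticAt hUs).meromorphicAt.mul
        ((meromorphicAt_riemannZeta _).comp_analyticAt harg)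
    · have hre : 1 < (e s + γ).re := by
        rw [Complex.add_re, Complex.ofReal_re]
        linarith
      refine ((hasSum_nat_add_one_cpow_neg hre).mul_left (c s)).congr_fun fun k => ?_
      rw [mul_left_comm, nat_add_one_cpow_neg_mul_indexPow]

theorem norm_nat_add_one_cpow_neg_mul_le {σ M K : ℝ} {k : ℕ} {w z s : ℂ} (hσ : σ ≤ w.re)
    (hz : ‖z‖ ≤ K * indexPow (M - σ) (k, s)) :
    ‖((k + 1 : ℕ) : ℂ) ^ (-w) * z‖ ≤ K * ((k + 1 : ℕ) : ℝ) ^ (-M) := by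
  rw [indexPow] at hz
  rw [norm_mul, norm_nat_add_one_cpow, Complex.neg_re]
  calc ((k + 1 : ℕ) : ℝ) ^ (-w.re) * ‖z‖
      ≤ ((k + 1 : ℕ) : ℝ) ^ (-σ) * (K * ((k + 1 : ℕ) : ℝ) ^ (-(M - σ))) := by
        gcongr
        exact one_le_cast_add_one k
    _ = K * ((k + 1 : ℕ) : ℝ) ^ (-M) := by
        rw [mul_left_comm, ← Real.rpow_add (by positivity)]
        ring_nf

theorem HasPowerExpansion.exists_meromorphicOn_hasSum {σ : ℝ} (hU : IsOpen U)
    (he : DifferentiableOn ℂ e U) (hσ : ∀ s ∈ U, σ ≤ (e s).re)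
    (hf : HasPowerExpansion U fun q => ((q.1 + 1 : ℕ) : ℂ) ^ e q.2 * f q)
    (hfd : ∀ k, DifferentiableOn ℂ (fun s => f (k, s)) U) :
    ∃ G, MeromorphicOn G U ∧
      ∀ s ∈ U, 1 < (e s).re → HasSum (fun k : ℕ => f (k, s)) (G s) := by
  obtain ⟨p, hp, hfp⟩ := hf (2 - σ)
  obtain ⟨G, hG, hGsum⟩ := hp.exists_meromorphicOn_hasSum hU he
  obtain ⟨K, hK⟩ := isBigO_principal.1 hfp
  have hbase (k : ℕ) : ((k + 1 : ℕ) : ℂ) ≠ 0 := Nat.cast_ne_zero.2 k.succ_ne_zero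
  set r : ℕ → ℂ → ℂ := fun k s =>
    ((k + 1 : ℕ) : ℂ) ^ (-e s) * (((k + 1 : ℕ) : ℂ) ^ e s * f (k, s) - p (k, s)) with hrdef
  have hsummable : Summable fun k : ℕ => K * ((k + 1 : ℕ) : ℝ) ^ (-2 : ℝ) :=
    (summable_nat_add_one_rpow (by norm_num)).mul_left K
  have hr : ∀ k, ∀ s ∈ U, ‖r k s‖ ≤ K * ((k + 1 : ℕ) : ℝ) ^ (-2 : ℝ) := fun k s hs => by
    have hbound := hK (k, s) ⟨mem_univ k, hs⟩
    rw [Real.norm_of_nonneg (indexPow_pos _ _).le] at hbound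
    exact norm_nat_add_one_cpow_neg_mul_le (hσ s hs) hbound
  have hrd : DifferentiableOn ℂ (fun s => ∑' k, r k s) U :=
    Complex.differentiableOn_tsum_of_summable_norm hsummable (fun k =>
      (he.neg.const_cpow (.inl (hbase k))).mul (((he.const_cpow (.inl (hbase k))).mul (hfd k)).sub
        (hp.differentiableOn k))) hU hr
  refine ⟨fun s => G s + ∑' k, r k s, fun s hs => (hG s hs).add
    (hrd.analyticAt (hU.mem_nhds hs)).meromorphicAt, fun s hs h1 => ?_⟩
  have hrs : Summable fun k => r k s := .of_norm_bounded hsummable fun k => hr k s hs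
  refine ((hGsum s hs h1).add hrs.hasSum).congr_fun fun k => ?_
  rw [hrdef, ← mul_add, add_sub_cancel, ← mul_assoc, ← Complex.cpow_add _ _ (hbase k),
    neg_add_cancel, Complex.cpow_zero, one_mul]

end ZetaContinuation

section BinomialTaylor

theorem differentiable_choose (n : ℕ) : Differentiable ℂ fun w : ℂ => Ring.choose w n := by
  simp only [Ring.choose_eq_smul, ← Polynomial.aeval_eq_smeval,
    ← Polynomial.eval_map_algebraMap]
  exact (Polynomial.differentiable _).const_smul (_ : ℂ)

theorem choose_succ_mul (n : ℕ) (w : ℂ) :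
    Ring.choose w (n + 1) * (n + 1) = w * Ring.choose (w - 1) n := by
  simpa [mul_comm] using Ring.choose_smul_choose w (Nat.le_add_left 1 n)

/-- The remainder after `N` terms of the binomial series of `(1 + x) ^ w`. -/
noncomputable def binomialRemainder (N : ℕ) (w : ℂ) (x : ℝ) : ℂ :=
  ((1 + x : ℝ) : ℂ) ^ w - ∑ n ∈ Finset.range N, Ring.choose w n * (x : ℂ) ^ n

theorem binomialRemainder_succ_zero (N : ℕ) (w : ℂ) : binomialRemainder (N + 1) w 0 = 0 := by
  simp [binomialRemainder, Finset.sum_range_succ']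

theorem hasDerivAt_binomialRemainder_succ (N : ℕ) (w : ℂ) {x : ℝ} (hx : -1 < x) :
    HasDerivAt (binomialRemainder (N + 1) w) (w * binomialRemainder N (w - 1) x) x := by
  have hx1 : (1 + x : ℂ) ∈ Complex.slitPlane := by
    exact_mod_cast Complex.ofReal_mem_slitPlane.2 (by linarith : 0 < 1 + x)
  have hpow : HasDerivAt (fun y : ℝ => ((1 + y : ℝ) : ℂ) ^ w) (w * ((1 + x : ℝ) : ℂ) ^ (w - 1)) x :=
    by simpa using (((hasDerivAt_id (x : ℂ)).const_add 1).cpow_const hx1).comp_ofReal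
  have hterm (n : ℕ) : HasDerivAt (fun y : ℝ => Ring.choose w (n + 1) * (y : ℂ) ^ (n + 1))
      (w * (Ring.choose (w - 1) n * (x : ℂ) ^ n)) x := by
    convert! ((hasDerivAt_pow (n + 1) (x : ℂ)).comp_ofReal).const_mul (Ring.choose w (n + 1))
      using 1
    rw [← mul_assoc, ← choose_succ_mul]
    push_cast
    ring_nf
  have hsum := (HasDerivAt.fun_sum fun n (_ : n ∈ Finset.range N) => hterm n).add_const 1
  rw [binomialRemainder, mul_sub, Finset.mul_sum]
  convert! hpow.sub hsum using 1
  ext y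
  simp [binomialRemainder, Finset.sum_range_succ']

theorem exists_norm_binomialRemainder_le {a b : ℝ} (ha : -1 < a) (h0 : 0 ∈ Icc a b) (N : ℕ)
    (R : ℝ) : ∃ K : ℝ, 0 ≤ K ∧ ∀ w : ℂ, ‖w‖ ≤ R → ∀ x ∈ Icc a b,
      ‖binomialRemainder N w x‖ ≤ K * |x| ^ N := by
  induction N generalizing R with
  | zero =>
    have hcont : ContinuousOn (fun q : ℂ × ℝ => ((1 + q.2 : ℝ) : ℂ) ^ q.1)
        (Metric.closedBall 0 R ×ˢ Icc a b) := by
      refine ContinuousOn.cpow (by fun_prop) (by fun_prop) fun q hq => ?_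
      exact Complex.ofReal_mem_slitPlane.2 (by linarith [hq.2.1])
    obtain ⟨K, hK⟩ := ((isCompact_closedBall 0 R).prod isCompact_Icc).exists_bound_of_continuousOn
      hcont
    refine ⟨|K|, abs_nonneg K, fun w hw x hx => ?_⟩
    simpa [binomialRemainder] using (hK (w, x) ⟨by simpa using hw, hx⟩).trans (le_abs_self K)
  | succ N ih =>
    obtain ⟨K, hK0, hK⟩ := ih (R + 1)
    refine ⟨|R| * K, by positivity, fun w hw x hx => ?_⟩
    have hsub : uIcc 0 x ⊆ Icc a b := uIcc_subset_Icc h0 hx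
    have hw1 : ‖w - 1‖ ≤ R + 1 := (norm_sub_le _ _).trans (by simpa using hw)
    have hderiv : ∀ y ∈ uIcc 0 x, ‖w * binomialRemainder N (w - 1) y‖ ≤ |R| * (K * |x| ^ N) := by
      intro y hy
      have hyx : |y| ≤ |x| := by simpa using abs_sub_left_of_mem_uIcc hy
      rw [norm_mul]
      exact mul_le_mul (hw.trans (le_abs_self R))
        ((hK _ hw1 y (hsub hy)).trans (by gcongr)) (norm_nonneg _) (abs_nonneg R)
    have hmean := (convex_uIcc 0 x).norm_image_sub_le_of_norm_hasDerivWithin_le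
      (fun y hy => (hasDerivAt_binomialRemainder_succ N w
        (ha.trans_le (hsub hy).1)).hasDerivWithinAt) hderiv left_mem_uIcc right_mem_uIcc
    rw [binomialRemainder_succ_zero, sub_zero, sub_zero, Real.norm_eq_abs] at hmean
    exact hmean.trans_eq (by ring)

theorem HasPowerExpansion.one_add_cpow {U : Set ℂ} {w : ℂ → ℂ} {x : ℕ → ℝ} {a b γ : ℝ}
    (hU : Bornology.IsBounded U) (hw : Differentiable ℂ w) (hγ : 0 < γ) (ha : -1 < a)
    (h0 : 0 ∈ Icc a b) (hx : ∀ k, x k ∈ Icc a b)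
    (hxexp : HasPowerExpansion U fun q => (x q.1 : ℂ))
    (hxγ : (fun q : ℕ × ℂ => (x q.1 : ℂ)) =O[𝓟 (univ ×ˢ U)] indexPow γ) :
    HasPowerExpansion U fun q => ((1 + x q.1 : ℝ) : ℂ) ^ w q.2 := by
  refine .of_taylor hγ hxexp hxγ (c := fun n s => Ring.choose (w s) n) (fun n =>
    .of_differentiable hU ((differentiable_choose n).comp hw)) fun N => ?_
  obtain ⟨R, hR⟩ := hU.isCompact_closure.exists_bound_of_continuousOn hw.continuous.continuousOn
  obtain ⟨K, -, hK⟩ := exists_norm_binomialRemainder_le ha h0 N R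
  refine isBigO_principal.2 ⟨K, fun q hq => ?_⟩
  simpa [binomialRemainder] using hK _ (hR q.2 (subset_closure hq.2)) (x q.1) (hx q.1)

end BinomialTaylor

section BoundedContinuation

variable {U : Set ℂ} {B δ : ℝ}

theorem HasPowerExpansion.one_add_mul_indexPow_cpow {w : ℂ → ℂ} {c γ : ℝ}
    (hU : Bornology.IsBounded U) (hw : Differentiable ℂ w) (hγ : 0 < γ) (hc : -1 < c) :
    HasPowerExpansion U fun q => ((1 + c * indexPow γ q : ℝ) : ℂ) ^ w q.2 := by
  refine .one_add_cpow (x := fun k => c * indexPow γ (k, 0)) hU hw hγ (a := min c 0) (b := max c 0)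
    (lt_min hc (by norm_num)) right_mem_uIcc (fun k => ?_) ?_ ?_
  · have hle : indexPow γ (k, 0) ≤ 1 := by
      simpa only [indexPow_zero] using indexPow_le_indexPow hγ.le (k, 0)
    have hpos := indexPow_pos γ (k, 0)
    rcases le_total 0 c with h | h
    · rw [min_eq_right h, max_eq_left h]
      exact ⟨by positivity, mul_le_of_le_one_right h hle⟩
    · rw [min_eq_left h, max_eq_right h]
      exact ⟨by nlinarith, mul_nonpos_of_nonpos_of_nonneg h hpos.le⟩
  · simp only [Complex.ofReal_mul]
    exact (IsCoefficient.const U c).hasPowerExpansion.mul (hasPowerExpansion_indexPow U hγ.le)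
  · exact Complex.isBigO_ofReal_left.2 (isBigO_const_mul_self c (indexPow γ) _)

theorem HasPowerExpansion.truncatedBeta {r : ℕ × ℂ → ℝ} {γ θ : ℝ} (hγ : 0 < γ) (hθ : θ < 1)
    (hUθ : ∀ s ∈ U, s.re ≤ θ) (hr0 : ∀ q, 0 < r q) (hr : HasPowerExpansion U fun q => (r q : ℂ))
    (hrγ : (fun q => (r q : ℂ)) =O[𝓟 (univ ×ˢ U)] indexPow γ) :
    HasPowerExpansion U fun q => truncatedBeta (r q) (1 - q.2) := by
  have hre (n : ℕ) {s : ℂ} (hs : s ∈ U) : 1 - θ ≤ (1 - s + n).re := by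
    simp only [Complex.add_re, Complex.sub_re, Complex.one_re, Complex.natCast_re]
    linarith [hUθ s hs, n.cast_nonneg (α := ℝ)]
  have hθ0 : 0 < 1 - θ := by linarith
  refine .of_taylor hγ hr hrγ (c := fun n s => (-1) ^ n / (n + (1 - s))) (fun n => ⟨?_, ?_⟩)
    fun N => isBigO_principal.2 ⟨1 / (1 - θ), fun q hq => ?_⟩
  · refine (differentiableOn_const _).div (by fun_prop) fun s hs h => ?_
    have := hre n hs
    rw [add_comm, h, Complex.zero_re] at this
    linarith
  · refine isBigO_principal.2 ⟨1 / (1 - θ), fun s hs => ?_⟩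
    have hnorm : 1 - θ ≤ ‖(n : ℂ) + (1 - s)‖ := by
      rw [add_comm]
      exact (hre n hs).trans (Complex.re_le_norm _)
    simpa using inv_anti₀ hθ0 hnorm
  · have h1 : 0 < (1 - q.2).re := by simpa using hθ0.trans_le (hre 0 hq.2)
    have hbeta : ‖CuspZeta.truncatedBeta (r q) (1 - q.2 + N)‖ ≤ 1 / (1 - θ) :=
      (norm_truncatedBeta_le (hr0 q) (hθ0.trans_le (hre N hq.2))).trans
        (one_div_le_one_div_of_le hθ0 (hre N hq.2))
    have hsum : ∑ n ∈ Finset.range N, (-1) ^ n / (n + (1 - q.2)) * (r q : ℂ) ^ n =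
        ∑ n ∈ Finset.range N, (-(r q : ℂ)) ^ n / (n + (1 - q.2)) :=
      Finset.sum_congr rfl fun n _ => by rw [neg_pow (r q : ℂ)]; ring
    rw [truncatedBeta_eq_sum_add (hr0 q) N h1, hsum, add_sub_cancel_left, norm_mul, norm_pow,
      norm_neg, norm_pow, mul_comm]
    gcongr

theorem shift_eq_rpow_mul (hB : 0 < B) (q : ℕ × ℂ) :
    shift B (q.1 + 1 : ℕ) =
      ((q.1 + 1 : ℕ) : ℝ) ^ (2 : ℝ) * (B * (1 + (4 * B)⁻¹ * indexPow 2 q)) := by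
  have hn : ((q.1 + 1 : ℕ) : ℝ) ≠ 0 := by positivity
  rw [shift, indexPow, Real.rpow_neg (by positivity), Real.rpow_two]
  field_simp

theorem cutoff_eq_rpow_mul (δ : ℝ) (q : ℕ × ℂ) :
    cutoff δ (q.1 + 1 : ℕ) =
      ((q.1 + 1 : ℕ) : ℝ) ^ (2 * δ) * (1 + -(1 / 4) * indexPow (2 * δ) q) := by
  have hn : ((q.1 + 1 : ℕ) : ℝ) ^ (2 * δ) ≠ 0 := by positivity
  rw [cutoff, indexPow, Real.rpow_neg (by positivity)]
  field_simp
  ring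

theorem one_add_mul_indexPow_pos {c γ : ℝ} (hc : -1 < c) (hγ : 0 ≤ γ) (q : ℕ × ℂ) :
    0 < 1 + c * indexPow γ q := by
  have hle : indexPow γ q ≤ 1 := by simpa only [indexPow_zero] using indexPow_le_indexPow hγ q
  nlinarith [indexPow_pos γ q]

theorem ofReal_rpow_mul_cpow {x y : ℝ} (hx : 0 < x) (hy : 0 ≤ y) (γ : ℝ) (w : ℂ) :
    ((x ^ γ * y : ℝ) : ℂ) ^ w = (x : ℂ) ^ (γ * w) * (y : ℂ) ^ w := by
  rw [Complex.ofReal_mul, Complex.mul_cpow_ofReal_nonneg (by positivity) hy,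
    Complex.cpow_mul_ofReal_nonneg hx.le]

theorem neg_one_lt_four_mul_inv (hB : 0 < B) : -1 < (4 * B)⁻¹ := by
  linarith [inv_pos.2 (by positivity : 0 < 4 * B)]

theorem cpow_mul_shift_cpow_neg (hB : 0 < B) (q : ℕ × ℂ) :
    ((q.1 + 1 : ℕ) : ℂ) ^ (2 * q.2) * (shift B (q.1 + 1 : ℕ) : ℂ) ^ (-q.2) =
      (B : ℂ) ^ (-q.2) * ((1 + (4 * B)⁻¹ * indexPow 2 q : ℝ) : ℂ) ^ (-q.2) := by
  have hn : ((q.1 + 1 : ℕ) : ℂ) ≠ 0 := Nat.cast_ne_zero.2 q.1.succ_ne_zero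
  have hpos := one_add_mul_indexPow_pos (neg_one_lt_four_mul_inv hB) zero_le_two q
  rw [shift_eq_rpow_mul hB, ofReal_rpow_mul_cpow (by positivity) (by positivity), ← mul_assoc,
    Complex.ofReal_natCast, ← Complex.cpow_add _ _ hn, Complex.ofReal_mul B,
    Complex.mul_cpow_ofReal_nonneg hB.le hpos.le]
  simp

theorem hasPowerExpansion_cpow_mul_shift_cpow_neg (hU : Bornology.IsBounded U) (hB : 0 < B) :
    HasPowerExpansion U fun q =>
      ((q.1 + 1 : ℕ) : ℂ) ^ (2 * q.2) * (shift B (q.1 + 1 : ℕ) : ℂ) ^ (-q.2) := by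
  simp only [cpow_mul_shift_cpow_neg hB]
  exact (IsCoefficient.of_differentiable hU
    (differentiable_ofReal_cpow_neg hB)).hasPowerExpansion.mul
      (.one_add_mul_indexPow_cpow hU differentiable_neg two_pos (neg_one_lt_four_mul_inv hB))

/-- The ratio `cutoff / shift` without its leading power `n ^ (2 δ - 2)`. -/
noncomputable def ratioFactor (B δ : ℝ) (q : ℕ × ℂ) : ℝ :=
  (1 + -(1 / 4) * indexPow (2 * δ) q) * (B * (1 + (4 * B)⁻¹ * indexPow 2 q))⁻¹

theorem ratio_eq_indexPow_mul_ratioFactor (hB : 0 < B) (δ : ℝ) (q : ℕ × ℂ) :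
    ratio B δ (q.1 + 1 : ℕ) = indexPow (2 - 2 * δ) q * ratioFactor B δ q := by
  have hlead : indexPow (2 - 2 * δ) q =
      ((q.1 + 1 : ℕ) : ℝ) ^ (2 * δ) / ((q.1 + 1 : ℕ) : ℝ) ^ (2 : ℝ) := by
    rw [indexPow, neg_sub, Real.rpow_sub (by positivity)]
  rw [ratio, cutoff_eq_rpow_mul, shift_eq_rpow_mul hB, ratioFactor, hlead, ← div_eq_mul_inv,
    div_mul_div_comm]

theorem hasPowerExpansion_ratioFactor (hU : Bornology.IsBounded U) (hB : 0 < B) (hδ : 0 < δ) :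
    HasPowerExpansion U fun q => (ratioFactor B δ q : ℂ) := by
  have hnum := HasPowerExpansion.one_add_mul_indexPow_cpow (c := -(1 / 4)) hU
    (differentiable_const (1 : ℂ)) (by positivity : 0 < 2 * δ) (by norm_num)
  have hden := HasPowerExpansion.one_add_mul_indexPow_cpow hU (differentiable_const (-1 : ℂ))
    two_pos (neg_one_lt_four_mul_inv hB)
  simp only [Complex.cpow_one, Complex.cpow_neg_one, ← Complex.ofReal_inv] at hnum hden
  simpa only [ratioFactor, mul_inv, Complex.ofReal_mul] using
    hnum.mul ((IsCoefficient.const U (B⁻¹ : ℝ)).hasPowerExpansion.mul hden)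

theorem hasPowerExpansion_truncatedBeta_ratio {θ : ℝ} (hU : Bornology.IsBounded U) (hθ : θ < 1)
    (hUθ : ∀ s ∈ U, s.re ≤ θ) (hB : 0 < B) (hδ : 0 < δ) (hδ1 : δ < 1) :
    HasPowerExpansion U fun q => truncatedBeta (ratio B δ (q.1 + 1 : ℕ)) (1 - q.2) := by
  have hγ : 0 < 2 - 2 * δ := by linarith
  have hfactor := hasPowerExpansion_ratioFactor hU hB hδ
  have hratio : (fun q : ℕ × ℂ => (ratio B δ (q.1 + 1 : ℕ) : ℂ)) =
      fun q => (indexPow (2 - 2 * δ) q : ℂ) * ratioFactor B δ q :=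
    funext fun q => by rw [ratio_eq_indexPow_mul_ratioFactor hB, Complex.ofReal_mul]
  refine .truncatedBeta hγ hθ hUθ (r := fun q => ratio B δ (q.1 + 1 : ℕ))
    (fun q => ratio_pos hB.le hδ.le (one_le_cast_add_one q.1)) ?_ ?_
  · rw [hratio]
    exact (hasPowerExpansion_indexPow U hγ.le).mul hfactor
  · rw [hratio]
    simpa only [mul_one] using
      (Complex.isBigO_ofReal_left.2 (isBigO_refl (indexPow (2 - 2 * δ)) _)).mul hfactor.isBigO_one

theorem cpow_mul_cuspTail (hB : 0 < B) (hδ : 0 ≤ δ) (q : ℕ × ℂ) :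
    ((q.1 + 1 : ℕ) : ℂ) ^ (2 - 2 * δ + 2 * δ * q.2) * cuspTail B δ (q.1 + 1 : ℕ) q.2 =
      ratioFactor B δ q * ((1 + -(1 / 4) * indexPow (2 * δ) q : ℝ) : ℂ) ^ (-q.2) *
        truncatedBeta (ratio B δ (q.1 + 1 : ℕ)) (1 - q.2) := by
  have hn : ((q.1 + 1 : ℕ) : ℂ) ≠ 0 := Nat.cast_ne_zero.2 q.1.succ_ne_zero
  have hpos := one_add_mul_indexPow_pos (c := -(1 / 4)) (γ := 2 * δ) (by norm_num) (by positivity) q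
  have hpowers : ((q.1 + 1 : ℕ) : ℂ) ^ (2 - 2 * δ + 2 * δ * q.2) * indexPow (2 - 2 * δ) q *
      ((q.1 + 1 : ℕ) : ℂ) ^ ((2 * δ : ℝ) * -q.2) = 1 := by
    rw [indexPow_eq_cpow_neg, ← Complex.cpow_add _ _ hn, ← Complex.cpow_add _ _ hn]
    push_cast
    ring_nf
    exact Complex.cpow_zero _
  rw [cuspTail, cutoff_eq_rpow_mul, ofReal_rpow_mul_cpow (by positivity) hpos.le,
    Complex.ofReal_natCast]
  nth_rw 1 [ratio_eq_indexPow_mul_ratioFactor hB]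
  rw [Complex.ofReal_mul]
  linear_combination (ratioFactor B δ q * ((1 + -(1 / 4) * indexPow (2 * δ) q : ℝ) : ℂ) ^ (-q.2) *
        truncatedBeta (ratio B δ (q.1 + 1 : ℕ)) (1 - q.2)) * hpowers

theorem hasPowerExpansion_cpow_mul_cuspTail {θ : ℝ} (hU : Bornology.IsBounded U) (hθ : θ < 1)
    (hUθ : ∀ s ∈ U, s.re ≤ θ) (hB : 0 < B) (hδ : 0 < δ) (hδ1 : δ < 1) :
    HasPowerExpansion U fun q => ((q.1 + 1 : ℕ) : ℂ) ^ (2 - 2 * δ + 2 * δ * q.2) *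
      cuspTail B δ (q.1 + 1 : ℕ) q.2 := by
  simp only [cpow_mul_cuspTail hB hδ.le]
  exact ((hasPowerExpansion_ratioFactor hU hB hδ).mul (.one_add_mul_indexPow_cpow hU
    differentiable_neg (by positivity) (by norm_num))).mul
      (hasPowerExpansion_truncatedBeta_ratio hU hθ hUθ hB hδ hδ1)

theorem cuspZeta_eq_of_hasSum (hB : 0 ≤ B) (hδ : 0 ≤ δ) {s S T : ℂ} (h0 : 0 < s.re) (h1 : s.re < 1)
    (hS : HasSum (fun k : ℕ => (shift B (k + 1 : ℕ) : ℂ) ^ (-s)) S)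
    (hT : HasSum (fun k : ℕ => cuspTail B δ (k + 1 : ℕ) s) T) :
    cuspZeta B δ s = -(1 / 2) * S + Complex.sin (Real.pi * s) / (2 * Real.pi) * T := by
  refine (((hS.mul_left _).add (hT.mul_left _)).congr_fun fun k => ?_).tsum_eq
  exact cuspTerm_eq_add_cuspTail hB hδ (one_le_cast_add_one k) h0 h1

theorem exists_le_re_of_isBounded (hU : Bornology.IsBounded U) : ∃ ρ : ℝ, ∀ s ∈ U, ρ ≤ s.re := by
  obtain ⟨R, hR⟩ := hU.exists_norm_le
  exact ⟨-R, fun s hs => (abs_le.1 ((Complex.abs_re_le_norm s).trans (hR s hs))).1⟩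

theorem exists_meromorphicOn_hasSum_shift_cpow_neg (hU : IsOpen U) (hUb : Bornology.IsBounded U)
    (hB : 0 < B) :
    ∃ G, MeromorphicOn G U ∧ ∀ s ∈ U, 1 / 2 < s.re →
      HasSum (fun k : ℕ => (shift B (k + 1 : ℕ) : ℂ) ^ (-s)) (G s) := by
  obtain ⟨ρ, hρ⟩ := exists_le_re_of_isBounded hUb
  have hre (s : ℂ) : (2 * s).re = 2 * s.re := by simp
  have hdiff (k : ℕ) : DifferentiableOn ℂ (fun s => (shift B (k + 1 : ℕ) : ℂ) ^ (-s)) U :=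
    (differentiable_ofReal_cpow_neg (shift_pos hB.le _)).differentiableOn
  obtain ⟨G, hG, hsum⟩ := HasPowerExpansion.exists_meromorphicOn_hasSum (σ := 2 * ρ)
    (e := fun s => 2 * s) (f := fun q => (shift B (q.1 + 1 : ℕ) : ℂ) ^ (-q.2)) hU (by fun_prop)
    (fun s hs => by linarith [hre s, hρ s hs]) (hasPowerExpansion_cpow_mul_shift_cpow_neg hUb hB)
    hdiff
  refine ⟨G, hG, fun s hs hs2 => hsum s hs ?_⟩
  linarith [hre s]

theorem exists_meromorphicOn_hasSum_cuspTail {θ : ℝ} (hU : IsOpen U) (hUb : Bornology.IsBounded U)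
    (hθ : θ < 1) (hUθ : ∀ s ∈ U, s.re ≤ θ) (hB : 0 < B) (hδ : 0 < δ) (hδ1 : δ < 1) :
    ∃ G, MeromorphicOn G U ∧ ∀ s ∈ U, 1 / 2 < s.re →
      HasSum (fun k : ℕ => cuspTail B δ (k + 1 : ℕ) s) (G s) := by
  obtain ⟨ρ, hρ⟩ := exists_le_re_of_isBounded hUb
  have hre (s : ℂ) : (2 - 2 * δ + 2 * δ * s : ℂ).re = 2 - 2 * δ + 2 * δ * s.re := by simp
  obtain ⟨G, hG, hsum⟩ := HasPowerExpansion.exists_meromorphicOn_hasSum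
    (σ := 2 - 2 * δ + 2 * δ * ρ) (e := fun s => 2 - 2 * δ + 2 * δ * s)
    (f := fun q => cuspTail B δ (q.1 + 1 : ℕ) q.2) hU (by fun_prop)
    (fun s hs => by rw [hre]; gcongr; exact hρ s hs)
    (hasPowerExpansion_cpow_mul_cuspTail hUb hθ hUθ hB hδ hδ1)
    fun k s hs => (differentiableAt_cuspTail hB.le hδ.le (one_le_cast_add_one k)
      ((hUθ s hs).trans_lt hθ)).differentiableWithinAt
  refine ⟨G, hG, fun s hs hs2 => hsum s hs ?_⟩
  rw [hre]
  nlinarith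

theorem exists_meromorphicOn_eq_cuspZeta {θ : ℝ} (hU : IsOpen U) (hUb : Bornology.IsBounded U)
    (hθ : θ < 1) (hUθ : ∀ s ∈ U, s.re ≤ θ) (hB : 0 < B) (hδ : 0 < δ) (hδ1 : δ < 1) :
    ∃ G, MeromorphicOn G U ∧ ∀ s ∈ U, 1 / 2 < s.re → G s = cuspZeta B δ s := by
  obtain ⟨S, hS, hSsum⟩ := exists_meromorphicOn_hasSum_shift_cpow_neg hU hUb hB
  obtain ⟨T, hT, hTsum⟩ := exists_meromorphicOn_hasSum_cuspTail hU hUb hθ hUθ hB hδ hδ1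
  refine ⟨fun s => -(1 / 2) * S s + Complex.sin (Real.pi * s) / (2 * Real.pi) * T s,
    fun s hs => ?_, fun s hs hs2 => ?_⟩
  · have hsin : AnalyticAt ℂ (fun s : ℂ => Complex.sin (Real.pi * s) / (2 * Real.pi)) s :=
      (by fun_prop : Differentiable ℂ fun s : ℂ =>
        Complex.sin (Real.pi * s) / (2 * Real.pi)).analyticAt s
    exact ((MeromorphicAt.const _ _).mul (hS s hs)).add (hsin.meromorphicAt.mul (hT s hs))
  · exact (cuspZeta_eq_of_hasSum hB.le hδ.le (by linarith) ((hUθ s hs).trans_lt hθ)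
      (hSsum s hs hs2) (hTsum s hs hs2)).symm

end BoundedContinuation

section NearZero

theorem norm_cpow_neg_sub_cpow_neg_le {x y : ℝ} {s : ℂ} (hx : 0 < x) (hxy : x ≤ y)
    (hs : -1 ≤ s.re) : ‖(y : ℂ) ^ (-s) - (x : ℂ) ^ (-s)‖ ≤ ‖s‖ * x ^ (-s.re - 1) * (y - x) := by
  have hderiv : ∀ t ∈ Icc x y, HasDerivWithinAt (fun t : ℝ => (t : ℂ) ^ (-s))
      (-s * (t : ℂ) ^ (-s - 1)) (Icc x y) t := fun t ht => by
    have ht0 : (t : ℂ) ∈ Complex.slitPlane := Complex.ofReal_mem_slitPlane.2 (hx.trans_le ht.1)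
    simpa only [id, mul_one] using
      ((hasDerivAt_id (t : ℂ)).cpow_const (c := -s) ht0).comp_ofReal.hasDerivWithinAt
  have hbound : ∀ t ∈ Icc x y, ‖-s * (t : ℂ) ^ (-s - 1)‖ ≤ ‖s‖ * x ^ (-s.re - 1) := fun t ht => by
    rw [norm_mul, norm_neg, Complex.norm_cpow_eq_rpow_re_of_pos (hx.trans_le ht.1), Complex.sub_re,
      Complex.neg_re, Complex.one_re]
    exact mul_le_mul_of_nonneg_left (Real.rpow_le_rpow_of_nonpos hx ht.1 (by linarith))
      (norm_nonneg s)
  have hmean := (convex_Icc x y).norm_image_sub_le_of_norm_hasDerivWithin_le hderiv hbound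
    (left_mem_Icc.2 hxy) (right_mem_Icc.2 hxy)
  rwa [Real.norm_of_nonneg (sub_nonneg.2 hxy)] at hmean

/-- The difference between `(n² + ε) ^ (-s)` and `n ^ (-2 s)` for `n = k + 1`. -/
noncomputable def shiftDefect (ε : ℝ) (k : ℕ) (s : ℂ) : ℂ :=
  ((((k + 1 : ℕ) : ℝ) ^ 2 + ε : ℝ) : ℂ) ^ (-s) - ((((k + 1 : ℕ) : ℝ) ^ 2 : ℝ) : ℂ) ^ (-s)

/-- The sum of `shiftDefect ε k s` over `k`: the correction to `ζ(2 s)` in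
`∑ₙ (n² + ε) ^ (-s)`; meaningful for `Re s > -1/2`. -/
noncomputable def shiftDefectSum (ε : ℝ) (s : ℂ) : ℂ :=
  ∑' k, shiftDefect ε k s

/-- The sum of `cuspTail B δ n s` over `n = k + 1`; meaningful for `2 δ (1 - Re s) < 1`. -/
noncomputable def cuspTailSum (B δ : ℝ) (s : ℂ) : ℂ :=
  ∑' k : ℕ, cuspTail B δ (k + 1 : ℕ) s

/-- The continuation of `cuspZeta` to a neighbourhood of `0`. -/
noncomputable def cuspZetaNearZero (B δ : ℝ) (s : ℂ) : ℂ :=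
  -(1 / 2) * ((B : ℂ) ^ (-s) * (riemannZeta (2 * s) + shiftDefectSum (4 * B)⁻¹ s)) +
    Complex.sin (Real.pi * s) / (2 * Real.pi) * cuspTailSum B δ s

variable {B δ ε σ : ℝ} {s : ℂ}

theorem norm_shiftDefect_le (hε : 0 ≤ ε) (hσ : -1 ≤ σ) (hs : σ ≤ s.re) (k : ℕ) :
    ‖shiftDefect ε k s‖ ≤ ‖s‖ * ε * ((k + 1 : ℕ) : ℝ) ^ (-2 * σ - 2) := by
  have hn : (0 : ℝ) < ((k + 1 : ℕ) : ℝ) ^ 2 := by positivity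
  calc ‖shiftDefect ε k s‖
      ≤ ‖s‖ * (((k + 1 : ℕ) : ℝ) ^ 2) ^ (-s.re - 1) * (((k + 1 : ℕ) : ℝ) ^ 2 + ε -
          ((k + 1 : ℕ) : ℝ) ^ 2) :=
        norm_cpow_neg_sub_cpow_neg_le hn (by linarith) (by linarith)
    _ = ‖s‖ * ε * ((k + 1 : ℕ) : ℝ) ^ (2 * (-s.re - 1)) := by
        rw [Real.rpow_mul (by positivity), Real.rpow_two]
        ring
    _ ≤ ‖s‖ * ε * ((k + 1 : ℕ) : ℝ) ^ (-2 * σ - 2) := by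
        gcongr
        · exact one_le_cast_add_one k
        · linarith

theorem summable_shiftDefect (hε : 0 ≤ ε) (hs : -(1 / 2) < s.re) :
    Summable fun k => shiftDefect ε k s :=
  .of_norm_bounded ((summable_nat_add_one_rpow (by linarith)).mul_left _) fun k =>
    norm_shiftDefect_le hε (by linarith) le_rfl k

theorem differentiable_shiftDefect (hε : 0 ≤ ε) (k : ℕ) : Differentiable ℂ (shiftDefect ε k) :=
  (differentiable_ofReal_cpow_neg (by positivity)).sub
    (differentiable_ofReal_cpow_neg (by positivity))

theorem differentiableOn_shiftDefectSum (hε : 0 ≤ ε) (hσ : -(1 / 2) < σ) :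
    DifferentiableOn ℂ (shiftDefectSum ε) {s | σ < s.re} := by
  have hopen : IsOpen {s : ℂ | σ < s.re} := isOpen_lt continuous_const Complex.continuous_re
  refine (summableLocallyUniformlyOn_of_norm_le_mul hopen (W := fun s => ‖s‖ * ε)
    (by fun_prop) (summable_nat_add_one_rpow (p := -2 * σ - 2) (by linarith))
    (fun k => by positivity) fun k s (hs : σ < s.re) => ?_).differentiableOn hopen
    fun k s _ => differentiable_shiftDefect hε k s
  exact norm_shiftDefect_le hε (by linarith) hs.le k

theorem hasSum_shift_cpow_neg (hB : 0 < B) (hs : 1 / 2 < s.re) :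
    HasSum (fun k : ℕ => (shift B (k + 1 : ℕ) : ℂ) ^ (-s))
      ((B : ℂ) ^ (-s) * (riemannZeta (2 * s) + shiftDefectSum (4 * B)⁻¹ s)) := by
  have hε : 0 ≤ (4 * B)⁻¹ := by positivity
  have hzeta := hasSum_nat_add_one_cpow_neg (w := 2 * s) (by simpa using by linarith)
  refine ((hzeta.add (summable_shiftDefect hε (by linarith)).hasSum).mul_left _).congr_fun
    fun k => ?_
  have hsq : ((k + 1 : ℕ) : ℂ) ^ (-(2 * s)) = ((((k + 1 : ℕ) : ℝ) ^ 2 : ℝ) : ℂ) ^ (-s) := by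
    rw [← Real.rpow_two, ← Complex.cpow_mul_ofReal_nonneg (by positivity)]
    simp
  have hshift : shift B (k + 1 : ℕ) = B * (((k + 1 : ℕ) : ℝ) ^ 2 + (4 * B)⁻¹) := by
    rw [shift]
    field_simp
  rw [shiftDefect, hsq, add_sub_cancel, hshift, Complex.ofReal_mul,
    Complex.mul_cpow_ofReal_nonneg hB.le (by positivity)]

theorem norm_cuspTail_le_of_le_re (hB : 0 < B) (hδ : 0 ≤ δ) (hσ : σ ≤ s.re) (hs : s.re < 1)
    (k : ℕ) : ‖cuspTail B δ (k + 1 : ℕ) s‖ ≤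
      B⁻¹ * (1 - s.re)⁻¹ * ((k + 1 : ℕ) : ℝ) ^ (2 * δ * (1 - σ) - 2) := by
  have : 0 < 1 - s.re := by linarith
  refine (norm_cuspTail_le hB hδ (one_le_cast_add_one k) hs).trans ?_
  gcongr
  exact one_le_cast_add_one k

theorem summable_cuspTail (hB : 0 < B) (hδ : 0 ≤ δ) (hσ : 2 * δ * (1 - s.re) < 1) (hs : s.re < 1) :
    Summable fun k : ℕ => cuspTail B δ (k + 1 : ℕ) s :=
  .of_norm_bounded ((summable_nat_add_one_rpow (by linarith)).mul_left _) fun k =>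
    norm_cuspTail_le_of_le_re hB hδ le_rfl hs k

theorem differentiableOn_cuspTailSum (hB : 0 < B) (hδ : 0 ≤ δ) (hσ : 2 * δ * (1 - σ) < 1) :
    DifferentiableOn ℂ (cuspTailSum B δ) {s | σ < s.re ∧ s.re < 1} := by
  have hopen : IsOpen {s : ℂ | σ < s.re ∧ s.re < 1} :=
    (isOpen_lt continuous_const Complex.continuous_re).inter
      (isOpen_lt Complex.continuous_re continuous_const)
  refine (summableLocallyUniformlyOn_of_norm_le_mul hopen (W := fun s => B⁻¹ * (1 - s.re)⁻¹) ?_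
    (summable_nat_add_one_rpow (p := 2 * δ * (1 - σ) - 2) (by linarith))
    (fun k => by positivity) fun k s hs => ?_).differentiableOn hopen fun k s hs => ?_
  · exact continuousOn_const.mul (ContinuousOn.inv₀ (by fun_prop) fun s hs => by linarith [hs.2])
  · exact norm_cuspTail_le_of_le_re hB hδ hs.1.le hs.2 k
  · exact differentiableAt_cuspTail hB.le hδ (one_le_cast_add_one k) hs.2

theorem cuspZeta_eq_cuspZetaNearZero (hB : 0 < B) (hδ : 0 ≤ δ) (hδ1 : δ ≤ 1) (hs : 1 / 2 < s.re)
    (hs1 : s.re < 1) : cuspZeta B δ s = cuspZetaNearZero B δ s :=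
  cuspZeta_eq_of_hasSum hB.le hδ (by linarith) hs1 (hasSum_shift_cpow_neg hB hs)
    (summable_cuspTail hB hδ (by nlinarith) hs1).hasSum

theorem isOpen_re_mem_Ioo (σ τ : ℝ) : IsOpen {s : ℂ | σ < s.re ∧ s.re < τ} :=
  isOpen_Ioo.preimage Complex.continuous_re

theorem analyticAt_shiftDefectSum (hε : 0 ≤ ε) (hs : -(1 / 2) < s.re) :
    AnalyticAt ℂ (shiftDefectSum ε) s := by
  obtain ⟨σ, hσ, hσs⟩ := exists_between hs
  exact (differentiableOn_shiftDefectSum hε hσ).analyticAt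
    ((isOpen_lt continuous_const Complex.continuous_re).mem_nhds hσs)

theorem analyticAt_cuspTailSum (hB : 0 < B) (hδ : 0 < δ) (hs : 2 * δ * (1 - s.re) < 1)
    (hs1 : s.re < 1) : AnalyticAt ℂ (cuspTailSum B δ) s := by
  obtain ⟨σ, hσ, hσs⟩ : ∃ σ, 1 - 1 / (2 * δ) < σ ∧ σ < s.re := exists_between <| by
    rw [← lt_div_iff₀' (by positivity)] at hs
    linarith
  have hσ' : 2 * δ * (1 - σ) < 1 := by
    rw [← lt_div_iff₀' (by positivity)]
    linarith
  exact (differentiableOn_cuspTailSum hB hδ.le hσ').analyticAt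
    ((isOpen_re_mem_Ioo σ 1).mem_nhds ⟨hσs, hs1⟩)

theorem meromorphicAt_cuspZetaNearZero (hB : 0 < B) (hδ : 0 < δ) (hs : -(1 / 2) < s.re)
    (hsδ : 2 * δ * (1 - s.re) < 1) (hs1 : s.re < 1) : MeromorphicAt (cuspZetaNearZero B δ) s := by
  have hzeta : MeromorphicAt (fun s => riemannZeta (2 * s)) s :=
    (meromorphicAt_riemannZeta (2 * s)).comp_analyticAt (f := riemannZeta) (by fun_prop)
  have hpow : AnalyticAt ℂ (fun s : ℂ => (B : ℂ) ^ (-s)) s :=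
    (differentiable_ofReal_cpow_neg hB).analyticAt s
  have hsin : AnalyticAt ℂ (fun s : ℂ => Complex.sin (Real.pi * s) / (2 * Real.pi)) s := by
    fun_prop
  have hdefect := (analyticAt_shiftDefectSum (ε := (4 * B)⁻¹) (by positivity) hs).meromorphicAt
  exact ((MeromorphicAt.const _ s).mul (hpow.meromorphicAt.mul (hzeta.add hdefect))).add
    (hsin.meromorphicAt.mul (analyticAt_cuspTailSum hB hδ hsδ hs1).meromorphicAt)

theorem analyticAt_cuspZetaNearZero (hB : 0 < B) (hδ : 0 < δ) (hs : -(1 / 2) < s.re)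
    (hsδ : 2 * δ * (1 - s.re) < 1) (hs1 : s.re < 1 / 2) :
    AnalyticAt ℂ (cuspZetaNearZero B δ) s := by
  have hne : 2 * s ≠ 1 := fun h => by
    have hre := congr_arg Complex.re h
    simp only [Complex.mul_re, Complex.re_ofNat, Complex.im_ofNat, zero_mul, sub_zero,
      Complex.one_re] at hre
    linarith
  have hzeta : AnalyticAt ℂ (fun s => riemannZeta (2 * s)) s :=
    (analyticAt_riemannZeta hne).comp (by fun_prop)
  have hpow : AnalyticAt ℂ (fun s : ℂ => (B : ℂ) ^ (-s)) s :=
    (differentiable_ofReal_cpow_neg hB).analyticAt s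
  have hsin : AnalyticAt ℂ (fun s : ℂ => Complex.sin (Real.pi * s) / (2 * Real.pi)) s := by
    fun_prop
  have hdefect := analyticAt_shiftDefectSum (ε := (4 * B)⁻¹) (by positivity) hs
  exact (analyticAt_const.mul (hpow.mul (hzeta.add hdefect))).add
    (hsin.mul (analyticAt_cuspTailSum hB hδ hsδ (by linarith)))

theorem shiftDefectSum_zero (ε : ℝ) : shiftDefectSum ε 0 = 0 := by
  simp [shiftDefectSum, shiftDefect]

theorem deriv_cuspZetaNearZero_zero (hB : 0 < B) (hδ : 0 < δ) (hδ1 : δ < 1 / 2) :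
    deriv (cuspZetaNearZero B δ) 0 = ((Real.log (2 * Real.pi) - Real.log B / 2 : ℝ) : ℂ) / 2 -
      deriv (shiftDefectSum (4 * B)⁻¹) 0 / 2 + cuspTailSum B δ 0 / 2 := by
  have hpow : HasDerivAt (fun s : ℂ => (B : ℂ) ^ (-s)) (-Real.log B) 0 := by
    simpa [hB.ne', Complex.ofReal_log hB.le] using
      (hasDerivAt_neg (0 : ℂ)).const_cpow (c := (B : ℂ)) (.inl (by simpa using hB.ne'))
  have hzeta : HasDerivAt (fun s => riemannZeta (2 * s)) (-Real.log (2 * Real.pi)) 0 := by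
    have hz0 : HasDerivAt riemannZeta (-Real.log (2 * Real.pi) / 2) (2 * 0) := by
      have hdiff := (differentiableAt_riemannZeta zero_ne_one).hasDerivAt
      rw [deriv_riemannZeta_zero] at hdiff
      simpa [Complex.ofReal_log Real.two_pi_pos.le] using hdiff
    convert! hz0.comp (0 : ℂ) ((hasDerivAt_id (0 : ℂ)).const_mul 2) using 1
    ring
  have hdefect : HasDerivAt (shiftDefectSum (4 * B)⁻¹) (deriv (shiftDefectSum (4 * B)⁻¹) 0) 0 :=
    (analyticAt_shiftDefectSum (by positivity) (by norm_num)).differentiableAt.hasDerivAt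
  have htail : HasDerivAt (cuspTailSum B δ) (deriv (cuspTailSum B δ) 0) 0 :=
    (analyticAt_cuspTailSum hB hδ (by norm_num; linarith) (by norm_num))
      |>.differentiableAt.hasDerivAt
  have hsin : HasDerivAt (fun s : ℂ => Complex.sin (Real.pi * s) / (2 * Real.pi)) (1 / 2) 0 := by
    convert! (((hasDerivAt_id (0 : ℂ)).const_mul (Real.pi : ℂ)).csin).div_const (2 * Real.pi : ℂ)
      using 1
    have : (Real.pi : ℂ) ≠ 0 := Complex.ofReal_ne_zero.2 Real.pi_ne_zero
    simp
    field_simp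
  refine HasDerivAt.deriv ?_
  convert! ((hpow.mul (hzeta.add hdefect)).const_mul (-(1 / 2) : ℂ)).add (hsin.mul htail) using 1
  simp [shiftDefectSum_zero, riemannZeta_zero]
  ring

theorem exists_norm_deriv_shiftDefectSum_zero_le :
    ∃ C, ∀ ε, 0 ≤ ε → ‖deriv (shiftDefectSum ε) 0‖ ≤ C * ε := by
  have hsum := summable_nat_add_one_rpow (p := -(3 / 2)) (by norm_num)
  refine ⟨∑' k : ℕ, ((k + 1 : ℕ) : ℝ) ^ (-(3 / 2) : ℝ), fun ε hε => ?_⟩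
  have hderiv : HasDerivAt (shiftDefectSum ε) (deriv (shiftDefectSum ε) 0) 0 :=
    (analyticAt_shiftDefectSum hε (by norm_num)).differentiableAt.hasDerivAt
  refine hderiv.le_of_lip' (by positivity) ?_
  have hnhds : ∀ᶠ s : ℂ in 𝓝 0, -(1 / 4) < s.re :=
    (isOpen_lt continuous_const Complex.continuous_re).mem_nhds (by norm_num)
  filter_upwards [hnhds] with s hs
  rw [shiftDefectSum_zero, sub_zero, sub_zero, mul_assoc, mul_comm]
  rw [mul_comm ε]
  refine tsum_of_norm_bounded (hsum.hasSum.mul_left (‖s‖ * ε)) fun k => ?_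
  convert! norm_shiftDefect_le hε (by norm_num) hs.le k using 3
  norm_num

theorem exists_norm_cuspTailSum_zero_le (hδ : 0 ≤ δ) (hδ1 : δ < 1 / 2) :
    ∃ C, ∀ B, 0 < B → ‖cuspTailSum B δ 0‖ ≤ C * B⁻¹ := by
  have hsum := summable_nat_add_one_rpow (p := 2 * δ - 2) (by linarith)
  refine ⟨∑' k : ℕ, ((k + 1 : ℕ) : ℝ) ^ (2 * δ - 2), fun B hB => ?_⟩
  rw [mul_comm]
  refine tsum_of_norm_bounded (hsum.hasSum.mul_left B⁻¹) fun k => ?_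
  simpa using norm_cuspTail_le_of_le_re hB hδ (σ := 0) (s := 0) le_rfl zero_lt_one k

theorem exists_norm_deriv_cuspZetaNearZero_zero_sub_le (hδ : 0 < δ) (hδ1 : δ < 1 / 2) :
    ∃ C, ∀ a, 0 < a → ‖deriv (cuspZetaNearZero ((2 * Real.pi * a) ^ 2) δ) 0 -
      riemannZeta 0 * Real.log a‖ ≤ C * ((2 * Real.pi * a) ^ 2)⁻¹ := by
  obtain ⟨C₁, hC₁⟩ := exists_norm_deriv_shiftDefectSum_zero_le
  obtain ⟨C₂, hC₂⟩ := exists_norm_cuspTailSum_zero_le hδ.le hδ1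
  refine ⟨C₁ / 8 + C₂ / 2, fun a ha => ?_⟩
  set B := (2 * Real.pi * a) ^ 2 with hB
  have hB0 : 0 < B := by positivity
  have hlog : Real.log B = 2 * (Real.log (2 * Real.pi) + Real.log a) := by
    rw [hB, Real.log_pow, Real.log_mul Real.two_pi_pos.ne' ha.ne', Nat.cast_two]
  have hdiff : deriv (cuspZetaNearZero B δ) 0 - riemannZeta 0 * Real.log a =
      cuspTailSum B δ 0 / 2 - deriv (shiftDefectSum (4 * B)⁻¹) 0 / 2 := by
    rw [deriv_cuspZetaNearZero_zero hB0 hδ hδ1, hlog, riemannZeta_zero]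
    push_cast
    ring
  calc ‖deriv (cuspZetaNearZero B δ) 0 - riemannZeta 0 * Real.log a‖
      ≤ ‖cuspTailSum B δ 0‖ / 2 + ‖deriv (shiftDefectSum (4 * B)⁻¹) 0‖ / 2 := by
        simpa [hdiff] using norm_sub_le (cuspTailSum B δ 0 / 2) (deriv (shiftDefectSum _) 0 / 2)
    _ ≤ C₂ * B⁻¹ / 2 + C₁ * (4 * B)⁻¹ / 2 := by
        gcongr
        · exact hC₂ B hB0
        · exact hC₁ _ (by positivity)
    _ = (C₁ / 8 + C₂ / 2) * B⁻¹ := by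
        rw [mul_inv]
        ring

end NearZero

section Gluing

/-- `G` continues the germ of `f` at `z₀` meromorphically to the convex open set `U`. Convexity
makes the intersection of two such domains connected, so continuations agree where they overlap. -/
structure IsContinuation (f : ℂ → ℂ) (z₀ : ℂ) (U : Set ℂ) (G : ℂ → ℂ) : Prop where
  isOpen : IsOpen U
  convex : Convex ℝ U
  mem : z₀ ∈ U
  meromorphicOn : MeromorphicOn G U
  eventuallyEq : G =ᶠ[𝓝 z₀] f

variable {f G H : ℂ → ℂ} {z₀ z : ℂ} {U V : Set ℂ}

theorem eventuallyEq_nhdsNE_of_isPreconnected (hU : IsPreconnected U) (hG : MeromorphicOn G U)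
    (hH : MeromorphicOn H U) (hz₀ : z₀ ∈ U) (hGH : G =ᶠ[𝓝 z₀] H) (hz : z ∈ U) :
    G =ᶠ[𝓝[≠] z] H := by
  have hz₀_order : meromorphicOrderAt (G - H) z₀ = ⊤ := by
    rw [meromorphicOrderAt_eq_top_iff]
    filter_upwards [hGH.filter_mono nhdsWithin_le_nhds] with w hw using sub_eq_zero.2 hw
  have hz_order : meromorphicOrderAt (G - H) z = ⊤ := by
    by_contra hne
    exact ((hG.sub hH).exists_meromorphicOrderAt_ne_top_iff_forall ⟨⟨z, hz⟩, hU⟩).1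
      ⟨⟨z, hz⟩, hne⟩ ⟨z₀, hz₀⟩ hz₀_order
  rw [meromorphicOrderAt_eq_top_iff] at hz_order
  filter_upwards [hz_order] with w hw using sub_eq_zero.1 hw

namespace IsContinuation

theorem eventuallyEq_nhdsNE (hG : IsContinuation f z₀ U G) (hH : IsContinuation f z₀ V H)
    (hzU : z ∈ U) (hzV : z ∈ V) : G =ᶠ[𝓝[≠] z] H :=
  eventuallyEq_nhdsNE_of_isPreconnected (hG.convex.inter hH.convex).isPreconnected
    (hG.meromorphicOn.mono_set inter_subset_left) (hH.meromorphicOn.mono_set inter_subset_right)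
    ⟨hG.mem, hH.mem⟩ (hG.eventuallyEq.trans hH.eventuallyEq.symm) ⟨hzU, hzV⟩

theorem exists_meromorphicOn_univ (hcover : ∀ z, ∃ U G, IsContinuation f z₀ U G ∧ z ∈ U) :
    ∃ F : ℂ → ℂ, MeromorphicOn F univ ∧
      ∀ U G, IsContinuation f z₀ U G → ∀ z ∈ U, AnalyticAt ℂ G z → F =ᶠ[𝓝 z] G := by
  choose U G hG hmem using hcover
  set F : ℂ → ℂ := fun z => toMeromorphicNFAt (G z) z z
  have hF_eq : ∀ V H, IsContinuation f z₀ V H → ∀ z ∈ V, AnalyticAt ℂ H z → F z = H z := by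
    intro V H hH z hz hHz
    have hnf :=
      toMeromorphicNFAt_eventuallyEq_nhds_congr ((hG z).eventuallyEq_nhdsNE hH (hmem z) hz)
    change toMeromorphicNFAt (G z) z z = H z
    rw [hnf.self_of_nhds, toMeromorphicNFAt_eq_self.2 hHz.meromorphicNFAt]
  refine ⟨F, fun z _ => ((hG z).meromorphicOn z (hmem z)).congr ?_, fun V H hH z hz hHz => ?_⟩
  · filter_upwards [((hG z).meromorphicOn z (hmem z)).eventually_analyticAt,
      mem_nhdsWithin_of_mem_nhds ((hG z).isOpen.mem_nhds (hmem z))] with w hGw hwU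
    exact (hF_eq _ _ (hG z) w hwU hGw).symm
  · filter_upwards [hHz.eventually_analyticAt, hH.isOpen.mem_nhds hz] with w hHw hwV
    exact hF_eq _ _ hH w hwV hHw

end IsContinuation

end Gluing

section Continuation

variable {B δ : ℝ}

theorem analyticAt_cuspZeta (hB : 0 < B) (hδ : 0 < δ) {s : ℂ} (hs : 1 / 2 < s.re) :
    AnalyticAt ℂ (cuspZeta B δ) s :=
  (differentiableOn_cuspZeta hB hδ).analyticAt
    ((isOpen_lt continuous_const Complex.continuous_re).mem_nhds hs)

theorem isContinuation_cuspZeta (hB : 0 < B) (hδ : 0 < δ) :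
    IsContinuation (cuspZeta B δ) (3 / 4) {s | 1 / 2 < s.re} (cuspZeta B δ) where
  isOpen := isOpen_lt continuous_const Complex.continuous_re
  convex := convex_halfSpace_re_gt _
  mem := by norm_num
  meromorphicOn _ hs := (analyticAt_cuspZeta hB hδ hs).meromorphicAt
  eventuallyEq := .rfl

theorem isContinuation_cuspZetaNearZero (hB : 0 < B) (hδ : 0 < δ) (hδ1 : δ < 1 / 2) :
    IsContinuation (cuspZeta B δ) (3 / 4) {s | δ - 1 / 2 < s.re ∧ s.re < 1}
      (cuspZetaNearZero B δ) where
  isOpen := isOpen_re_mem_Ioo _ _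
  convex := (convex_halfSpace_re_gt _).inter (convex_halfSpace_re_lt _)
  mem := ⟨by norm_num; linarith, by norm_num⟩
  meromorphicOn s hs :=
    meromorphicAt_cuspZetaNearZero hB hδ (by linarith [hs.1]) (by nlinarith [hs.1]) hs.2
  eventuallyEq := by
    filter_upwards [(isOpen_re_mem_Ioo (1 / 2) 1).mem_nhds ⟨by norm_num, by norm_num⟩] with s hs
    exact (cuspZeta_eq_cuspZetaNearZero hB hδ.le (by linarith) hs.1 hs.2).symm

theorem exists_isContinuation_of_re_lt (hB : 0 < B) (hδ : 0 < δ) (hδ1 : δ < 1) {z : ℂ}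
    (hz : z.re < 7 / 8) : ∃ U G, IsContinuation (cuspZeta B δ) (3 / 4) U G ∧ z ∈ U := by
  set U : Set ℂ := Metric.ball 0 (‖z‖ + 1) ∩ {s | s.re < 7 / 8}
  have hopen : IsOpen U :=
    Metric.isOpen_ball.inter (isOpen_lt Complex.continuous_re continuous_const)
  have hmem : (3 / 4 : ℂ) ∈ U := by
    refine ⟨?_, by norm_num⟩
    rw [mem_ball_zero_iff]
    norm_num
    linarith [norm_nonneg z]
  obtain ⟨G, hG, hG_eq⟩ := exists_meromorphicOn_eq_cuspZeta (θ := 7 / 8) hopen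
    (Metric.isBounded_ball.subset inter_subset_left) (by norm_num) (fun s hs => hs.2.le) hB hδ hδ1
  refine ⟨U, G, ⟨hopen, (convex_ball _ _).inter (convex_halfSpace_re_lt _), hmem, hG, ?_⟩, ?_, hz⟩
  · filter_upwards [hopen.mem_nhds hmem,
      (isOpen_lt continuous_const Complex.continuous_re).mem_nhds
        (by norm_num : (1 / 2 : ℝ) < (3 / 4 : ℂ).re)] with s hsU hs using hG_eq s hsU hs
  · simp

theorem exists_meromorphicOn_univ_eq_cuspZeta (hB : 0 < B) (hδ : 0 < δ) (hδ1 : δ < 1 / 2) :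
    ∃ F : ℂ → ℂ, MeromorphicOn F univ ∧ EqOn F (cuspZeta B δ) {s | 1 / 2 < s.re} ∧
      F =ᶠ[𝓝 0] cuspZetaNearZero B δ := by
  have hcover : ∀ z, ∃ U G, IsContinuation (cuspZeta B δ) (3 / 4) U G ∧ z ∈ U := fun z => by
    rcases lt_or_ge z.re (7 / 8) with hz | hz
    · exact exists_isContinuation_of_re_lt hB hδ (by linarith) hz
    · exact ⟨_, _, isContinuation_cuspZeta hB hδ, by rw [mem_ofPred_eq]; linarith⟩
  obtain ⟨F, hF, hF_eq⟩ := IsContinuation.exists_meromorphicOn_univ hcover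
  refine ⟨F, hF, fun s hs => ?_, ?_⟩
  · exact (hF_eq _ _ (isContinuation_cuspZeta hB hδ) s hs
      (analyticAt_cuspZeta hB hδ hs)).self_of_nhds
  · exact hF_eq _ _ (isContinuation_cuspZetaNearZero hB hδ hδ1) 0
      ⟨by norm_num; linarith, by norm_num⟩
      (analyticAt_cuspZetaNearZero hB hδ (by norm_num) (by norm_num; linarith) (by norm_num))

end Continuation

end CuspZeta

open CuspZeta

theorem statement1_general (δ : ℝ) (hδ0 : 0 < δ) (hδ1 : δ < 1 / 2) :
    ∃ F : ℝ → ℂ → ℂ,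
      (∀ a : ℝ, 0 < a →
        (∀ s ∈ {s : ℂ | 1 / 2 < s.re}, Summable (fun k : ℕ => ‖cuspE0 a δ (k + 1) s‖)) ∧
        TendstoLocallyUniformlyOn
          (fun (n : ℕ) (s : ℂ) => ∑ k ∈ Finset.range n, cuspE0 a δ (k + 1) s)
          (fun s : ℂ => ∑' k : ℕ, cuspE0 a δ (k + 1) s)
          atTop {s : ℂ | 1 / 2 < s.re} ∧
        MeromorphicOn (F a) Set.univ ∧
        Set.EqOn (F a) (fun s : ℂ => ∑' k : ℕ, cuspE0 a δ (k + 1) s) {s : ℂ | 1 / 2 < s.re} ∧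
        AnalyticAt ℂ (F a) 0) ∧
      (fun a : ℝ => deriv (F a) 0 - riemannZeta 0 * (Real.log a : ℂ))
        =O[atTop] (fun a : ℝ => 1 / a ^ 2) := by
  have hB : ∀ {a : ℝ}, 0 < a → 0 < (2 * Real.pi * a) ^ 2 := fun ha => by positivity
  choose! F hF_mero hF_eq hF_zero using fun (a : ℝ) (ha : 0 < a) =>
    exists_meromorphicOn_univ_eq_cuspZeta (hB ha) hδ0 hδ1
  obtain ⟨C, hC⟩ := exists_norm_deriv_cuspZetaNearZero_zero_sub_le hδ0 hδ1
  refine ⟨F, fun a ha => ?_, .of_bound (C * ((2 * Real.pi) ^ 2)⁻¹) ?_⟩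
  · simp only [fun k => cuspE0_eq_cuspTerm ha hδ0.le (Nat.le_add_left 1 k)]
    exact ⟨fun s hs => summable_norm_cuspTerm (hB ha) hδ0 hs,
      tendstoLocallyUniformlyOn_cuspZeta (hB ha) hδ0, hF_mero a ha, hF_eq a ha,
      (analyticAt_cuspZetaNearZero (hB ha) hδ0 (by norm_num) (by norm_num; linarith)
        (by norm_num)).congr (hF_zero a ha).symm⟩
  · filter_upwards [eventually_gt_atTop 0] with a ha
    rw [(hF_zero a ha).deriv_eq, norm_div, norm_one, norm_pow, Real.norm_of_nonneg ha.le]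
    convert! hC a ha using 1
    field_simp

/-- for fixed `δ ∈ (0,1/8)`, for every `a > 0` the series
`ζ_{E,0}(s) = Σ_{k≥1} E_{0,k}(s)` converges absolutely and locally uniformly on the strip
`1 < Re(s) < 2`, its sum extends to a meromorphic function on `ℂ` holomorphic at `s = 0`,
and the derivative at `0` satisfies `ζ_{E,0}'(0) = ζ(0)·log a + O(1/a)` as `a → ∞`. -/
theorem statement1 (δ : ℝ) (hδ0 : 0 < δ) (hδ1 : δ < 1 / 8) :
    ∃ F : ℝ → ℂ → ℂ,
      (∀ a : ℝ, 0 < a →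
        (∀ s ∈ {s : ℂ | 1 < s.re ∧ s.re < 2},
          Summable (fun k : ℕ => ‖cuspE0 a δ (k + 1) s‖)) ∧
        TendstoLocallyUniformlyOn
          (fun (n : ℕ) (s : ℂ) => ∑ k ∈ Finset.range n, cuspE0 a δ (k + 1) s)
          (fun s : ℂ => ∑' k : ℕ, cuspE0 a δ (k + 1) s)
          atTop {s : ℂ | 1 < s.re ∧ s.re < 2} ∧
        MeromorphicOn (F a) Set.univ ∧
        Set.EqOn (F a) (fun s : ℂ => ∑' k : ℕ, cuspE0 a δ (k + 1) s)
          {s : ℂ | 1 < s.re ∧ s.re < 2} ∧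
        AnalyticAt ℂ (F a) 0) ∧
      (fun a : ℝ => deriv (F a) 0 - riemannZeta 0 * (Real.log a : ℂ))
        =O[atTop] (fun a : ℝ => 1 / a) := by
  obtain ⟨F, hF, hderiv⟩ := statement1_general δ hδ0 (by linarith)
  have hstrip : {s : ℂ | 1 < s.re ∧ s.re < 2} ⊆ {s : ℂ | 1 / 2 < s.re} :=
    fun s hs => one_half_lt_one.trans hs.1
  refine ⟨F, fun a ha => ?_, hderiv.trans (.of_bound 1 ?_)⟩
  · obtain ⟨hsummable, hunif, hmero, heq, hanalytic⟩ := hF a ha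
    exact ⟨fun s hs => hsummable s (hstrip hs), hunif.mono hstrip, hmero, heq.mono hstrip,
      hanalytic⟩
  · filter_upwards [eventually_ge_atTop 1] with a ha
    rw [one_mul, Real.norm_of_nonneg (by positivity), Real.norm_of_nonneg (by positivity)]
    exact one_div_le_one_div_of_le (by positivity) (le_self_pow₀ ha two_ne_zero)
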